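/- Let k be an algebraically closed field, m ≥ 2 and n ≥ 1. Then the algebra A(n,m,m−1) is geometrically irreducible; concretely, for all d, e ∈ ℕ the Zariski-closed subset of M_{d×d}(k) × M_{e×e}(k) × M_{d×e}(k)^n consisting of all tuples (V, U, Z_1, …, Z_n) with V^m = 0, U^m = 0 and Σ_{i=0}^{m−1} V^{m−1−i} Z_1 U^{i} = 0 is an irreducible topological space. -/

import Mathlib

/-!
Formalization of a statement from:
"Algebras with irreducible module varieties: two-vertex case completed"
-/

universe u v

open Quiver

noncomputable section

/-- The Zariski topology on the affine coordinate space `ι → k`: it is generated by the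
basic open sets `{x | p(x) ≠ 0}` for multivariate polynomials `p`. -/
def zariskiTop (k : Type u) [CommSemiring k] (ι : Type v) : TopologicalSpace (ι → k) :=
  TopologicalSpace.generateFrom
    {U | ∃ p : MvPolynomial ι k, U = {x | MvPolynomial.eval x p ≠ 0}}

/-- The ambient affine space for the representation varieties of `A(n, m, m-1)` with
dimension vector `(d, e)`: a `d × d` matrix (the value at the loop `ε₀`), an `e × e`
matrix (the value at the loop `ε₁`) and `n` matrices of size `d × e` (the values at the
arrows `α_1, …, α_n`). -/
def ASpace (k : Type u) [Field k] (n d e : ℕ) : Type u :=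
  Matrix (Fin d) (Fin d) k × Matrix (Fin e) (Fin e) k × (Fin n → Matrix (Fin d) (Fin e) k)

/-- The index type for the affine coordinates on `ASpace`. -/
def AIdx (n d e : ℕ) : Type := (Fin d × Fin d) ⊕ (Fin e × Fin e) ⊕ (Fin n × Fin d × Fin e)

/-- The affine coordinates on `ASpace`. -/
def aCoords {k : Type u} [Field k] {n d e : ℕ} (x : ASpace k n d e) : AIdx n d e → k
  | Sum.inl i => x.1 i.1 i.2
  | Sum.inr (Sum.inl i) => x.2.1 i.1 i.2
  | Sum.inr (Sum.inr i) => x.2.2 i.1 i.2.1 i.2.2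

/-- The Zariski topology on `ASpace`. -/
def aTop (k : Type u) [Field k] (n d e : ℕ) : TopologicalSpace (ASpace k n d e) :=
  (zariskiTop k (AIdx n d e)).induced aCoords

namespace GeomIrr
open Module
set_option linter.all false

section Poly
variable {k : Type*} [Field k]
variable {V V' V'' : Type*} [AddCommGroup V] [Module k V] [AddCommGroup V'] [Module k V']
  [AddCommGroup V''] [Module k V'']

/-- Polynomial functions on a vector space. -/
def Poly (k : Type*) [Field k] (V : Type*) [AddCommGroup V] [Module k V] :
    Subalgebra k (V → k) :=
  Algebra.adjoin k (Set.range (fun φ : Dual k V => (φ : V → k)))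

theorem Poly.dual (φ : Dual k V) : (φ : V → k) ∈ Poly k V :=
  Algebra.subset_adjoin ⟨φ, rfl⟩

theorem Poly.const (c : k) : (fun _ : V => c) ∈ Poly k V :=
  (Poly k V).algebraMap_mem c

theorem Poly.mul {f g : V → k} (hf : f ∈ Poly k V) (hg : g ∈ Poly k V) :
    (fun x => f x * g x) ∈ Poly k V := (Poly k V).mul_mem hf hg

theorem Poly.add {f g : V → k} (hf : f ∈ Poly k V) (hg : g ∈ Poly k V) :
    (fun x => f x + g x) ∈ Poly k V := (Poly k V).add_mem hf hg

theorem Poly.pow {f : V → k} (hf : f ∈ Poly k V) (n : ℕ) :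
    (fun x => f x ^ n) ∈ Poly k V := (Poly k V).pow_mem hf n

theorem Poly.sum {ι : Type*} (s : Finset ι) {f : ι → V → k} (hf : ∀ i ∈ s, f i ∈ Poly k V) :
    (fun x => ∑ i ∈ s, f i x) ∈ Poly k V := by
  have := (Poly k V).sum_mem hf
  convert this using 1
  ext x; simp

theorem Poly.prod {ι : Type*} (s : Finset ι) {f : ι → V → k} (hf : ∀ i ∈ s, f i ∈ Poly k V) :
    (fun x => ∏ i ∈ s, f i x) ∈ Poly k V := by
  have := (Poly k V).prod_mem hf
  convert this using 1
  ext x; simp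

/-- Polynomial maps. -/
def PolyMap (k : Type*) [Field k] {V V' : Type*} [AddCommGroup V] [Module k V] [AddCommGroup V']
    [Module k V'] (u : V → V') : Prop :=
  ∀ φ : Dual k V', (fun x => φ (u x)) ∈ Poly k V

theorem PolyMap.comp_poly {u : V → V'} (hu : PolyMap k u) {f : V' → k} (hf : f ∈ Poly k V') :
    (fun x => f (u x)) ∈ Poly k V := by
  unfold Poly at hf
  induction hf using Algebra.adjoin_induction with
  | mem x hx => obtain ⟨φ, rfl⟩ := hx; exact hu φ
  | algebraMap r => exact Poly.const r
  | add x y _ _ hx hy => exact Poly.add hx hy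
  | mul x y _ _ hx hy => exact Poly.mul hx hy

theorem PolyMap.linear (u : V →ₗ[k] V') : PolyMap k u := fun φ => Poly.dual (φ.comp u)

theorem PolyMap.id : PolyMap k (fun x : V => x) := PolyMap.linear (LinearMap.id)

theorem PolyMap.const (c : V') : PolyMap k (fun _ : V => c) := fun φ => Poly.const (φ c)

theorem PolyMap.comp {u : V → V'} {w : V' → V''} (hw : PolyMap k w) (hu : PolyMap k u) :
    PolyMap k (fun x => w (u x)) := fun φ => hu.comp_poly (hw φ)

theorem PolyMap.add {u w : V → V'} (hu : PolyMap k u) (hw : PolyMap k w) :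
    PolyMap k (fun x => u x + w x) := fun φ => by
  simpa using Poly.add (hu φ) (hw φ)

theorem PolyMap.lin {u : V → V'} (hu : PolyMap k u) (l : V' →ₗ[k] V'') :
    PolyMap k (fun x => l (u x)) := (PolyMap.linear l).comp hu

theorem PolyMap.sum {ι : Type*} (s : Finset ι) {u : ι → V → V'} (hu : ∀ i ∈ s, PolyMap k (u i)) :
    PolyMap k (fun x => ∑ i ∈ s, u i x) := fun φ => by
  simpa using Poly.sum s (fun i hi => hu i hi φ)

theorem PolyMap.smul {f : V → k} {u : V → V'} (hf : f ∈ Poly k V) (hu : PolyMap k u) :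
    PolyMap k (fun x => f x • u x) := fun φ => by
  simpa using Poly.mul hf (hu φ)

theorem PolyMap.of_poly {f : V → k} (hf : f ∈ Poly k V) : PolyMap k f := fun φ => by
  have : (fun x => φ (f x)) = fun x => f x * φ 1 := by
    ext x
    rw [← smul_eq_mul, ← map_smul]; simp
  rw [this]
  exact Poly.mul hf (Poly.const _)

theorem PolyMap.prodMk {u : V → V'} {w : V → V''} (hu : PolyMap k u) (hw : PolyMap k w) :
    PolyMap k (fun x => (u x, w x)) := by
  have := (hu.lin (LinearMap.inl k V' V'')).add (hw.lin (LinearMap.inr k V' V''))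
  simpa using this

theorem PolyMap.bilin {V₁ V₂ : Type*} [AddCommGroup V₁] [Module k V₁] [AddCommGroup V₂]
    [Module k V₂] [FiniteDimensional k V₁] (B : V₁ →ₗ[k] V₂ →ₗ[k] V') {u : V → V₁} {w : V → V₂}
    (hu : PolyMap k u) (hw : PolyMap k w) : PolyMap k (fun x => B (u x) (w x)) := by
  let b := Module.finBasis k V₁
  have : (fun x => B (u x) (w x)) = fun x => ∑ i, (b.coord i (u x)) • B (b i) (w x) := by
    ext x
    conv_lhs => rw [← b.sum_repr (u x)]
    simp only [map_sum, map_smul, LinearMap.sum_apply, LinearMap.smul_apply, Basis.coord_apply]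
  rw [this]
  exact PolyMap.sum _ fun i _ => PolyMap.smul (hu (b.coord i)) (hw.lin (B (b i)))

variable {M₁ M₂ M₃ : Type*} [AddCommGroup M₁] [Module k M₁] [FiniteDimensional k M₁]
  [AddCommGroup M₂] [Module k M₂] [FiniteDimensional k M₂]
  [AddCommGroup M₃] [Module k M₃] [FiniteDimensional k M₃]

theorem PolyMap.lcomp {u : V → (M₂ →ₗ[k] M₃)} {w : V → (M₁ →ₗ[k] M₂)}
    (hu : PolyMap k u) (hw : PolyMap k w) : PolyMap k (fun x => (u x) ∘ₗ (w x)) :=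
  PolyMap.bilin (LinearMap.llcomp k M₁ M₂ M₃) hu hw

theorem PolyMap.emul {u w : V → End k M₁} (hu : PolyMap k u) (hw : PolyMap k w) :
    PolyMap k (fun x => u x * w x) := PolyMap.lcomp hu hw

theorem PolyMap.epow {u : V → End k M₁} (hu : PolyMap k u) (n : ℕ) :
    PolyMap k (fun x => u x ^ n) := by
  induction n with
  | zero => simpa using PolyMap.const (1 : End k M₁)
  | succ n ih => simpa only [pow_succ] using ih.emul hu

theorem Poly.matdet {ι : Type*} [Fintype ι] [DecidableEq ι] {A : V → Matrix ι ι k}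
    (hA : ∀ i j, (fun x => A x i j) ∈ Poly k V) : (fun x => (A x).det) ∈ Poly k V := by
  simp only [Matrix.det_apply']
  exact Poly.sum _ fun σ _ => Poly.mul (Poly.const _) (Poly.prod _ fun i _ => hA _ _)

theorem PolyMap.det {u : V → End k M₁} (hu : PolyMap k u) :
    (fun x => LinearMap.det (u x)) ∈ Poly k V := by
  classical
  let b := Module.finBasis k M₁
  have : (fun x => LinearMap.det (u x)) = fun x => (LinearMap.toMatrix b b (u x)).det := by
    ext x; simp
  rw [this]
  refine Poly.matdet fun i j => ?_
  have h := hu ((b.coord i).comp ((LinearMap.applyₗ (b j)) : End k M₁ →ₗ[k] M₁))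
  simpa [LinearMap.toMatrix_apply] using h

theorem PolyMap.adj {u : V → End k M₁} (hu : PolyMap k u) :
    ∃ a : V → End k M₁, PolyMap k a ∧ ∀ x, a x * u x = LinearMap.det (u x) • 1 := by
  classical
  let b := Module.finBasis k M₁
  have hent : ∀ i j, (fun x => LinearMap.toMatrix b b (u x) i j) ∈ Poly k V := fun i j => by
    have h := hu ((b.coord i).comp ((LinearMap.applyₗ (b j)) : End k M₁ →ₗ[k] M₁))
    simpa [LinearMap.toMatrix_apply] using h
  refine ⟨fun x => Matrix.toLin b b (LinearMap.toMatrix b b (u x)).adjugate, ?_, ?_⟩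
  · have : PolyMap k (fun x => (LinearMap.toMatrix b b (u x)).adjugate) := by
      have h2 : ∀ A : V → Matrix (Fin (finrank k M₁)) (Fin (finrank k M₁)) k,
          (∀ i j, (fun x => A x i j) ∈ Poly k V) → PolyMap k A := by
        intro A hA
        have : A = fun x => ∑ i, ∑ j, (A x i j) • Matrix.single i j (1 : k) := by
          ext1 x
          conv_lhs => rw [Matrix.matrix_eq_sum_single (A x)]
          simp
        rw [this]
        exact PolyMap.sum _ fun i _ => PolyMap.sum _ fun j _ => PolyMap.smul (hA i j)
          (PolyMap.const _)
      refine h2 _ fun i j => ?_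
      simp only [Matrix.adjugate_apply]
      refine Poly.matdet fun a c => ?_
      simp only [Matrix.updateRow_apply]
      split_ifs
      · exact Poly.const _
      · exact hent _ _
    exact this.lin (Matrix.toLin b b).toLinearMap
  · intro x
    have h1 : u x = Matrix.toLin b b (LinearMap.toMatrix b b (u x)) := by simp
    conv_lhs => rw [h1]
    rw [Module.End.mul_eq_comp]
    simp only [LinearMap.toMatrix_toLin]
    rw [← Matrix.toLin_mul, Matrix.adjugate_mul]
    simp
    rfl

theorem Poly.homog {f : V → k} (hf : f ∈ Poly k V) :
    ∃ n : ℕ, ∃ F ∈ Poly k (V × k), ∀ v : V, ∀ δ : k, F (δ • v, δ) = δ ^ n * f v := by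
  unfold Poly at hf
  have hδ : (fun x : V × k => x.2) ∈ Poly k (V × k) := Poly.dual (LinearMap.snd k V k)
  induction hf using Algebra.adjoin_induction with
  | mem x hx =>
    obtain ⟨φ, rfl⟩ := hx
    refine ⟨1, fun x => φ x.1, Poly.dual (φ.comp (LinearMap.fst k V k)), fun v δ => by simp⟩
  | algebraMap r => exact ⟨0, fun _ => r, Poly.const r, fun v δ => by simp⟩
  | add x y _ _ hx hy =>
    obtain ⟨n, F, hF, h⟩ := hx
    obtain ⟨n', F', hF', h'⟩ := hy
    refine ⟨n + n', fun p => p.2 ^ n' * F p + p.2 ^ n * F' p,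
      Poly.add (Poly.mul (Poly.pow hδ _) hF) (Poly.mul (Poly.pow hδ _) hF'), fun v δ => ?_⟩
    simp only [h, h', Pi.add_apply]; ring
  | mul x y _ _ hx hy =>
    obtain ⟨n, F, hF, h⟩ := hx
    obtain ⟨n', F', hF', h'⟩ := hy
    refine ⟨n + n', fun p => F p * F' p, Poly.mul hF hF', fun v δ => ?_⟩
    simp only [h, h', Pi.mul_apply]; ring

/-- Clearing denominators. -/
theorem Poly.clear {h w : V → End k M₁} (hh : PolyMap k h) (hw : PolyMap k w)
    {f : End k M₁ → k} (hf : f ∈ Poly k (End k M₁)) :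
    ∃ n : ℕ, ∃ F ∈ Poly k V, ∀ x, ∀ g : End k M₁, h x * g = 1 →
      F x = LinearMap.det (h x) ^ n * f (g * w x * h x) := by
  obtain ⟨n, F, hF, hFe⟩ := Poly.homog hf
  obtain ⟨a, ha, hau⟩ := hh.adj
  refine ⟨n, fun x => F (a x * w x * h x, LinearMap.det (h x)),
    (((ha.emul hw).emul hh).prodMk (PolyMap.of_poly hh.det)).comp_poly hF, fun x g hg => ?_⟩
  rw [← hFe]
  have : a x = LinearMap.det (h x) • g := by
    calc a x = a x * (h x * g) := by rw [hg, mul_one]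
      _ = _ := by rw [← mul_assoc, hau]; simp
  simp only [this, smul_mul_assoc]

/-- Irreducible subsets. -/
def Irr (k : Type*) [Field k] {V : Type*} [AddCommGroup V] [Module k V] (T : Set V) : Prop :=
  T.Nonempty ∧ ∀ f ∈ Poly k V, ∀ g ∈ Poly k V, (∃ x ∈ T, f x ≠ 0) → (∃ x ∈ T, g x ≠ 0) →
    ∃ x ∈ T, f x ≠ 0 ∧ g x ≠ 0

theorem Irr.image {T : Set V} (hT : Irr k T) {u : V → V'} (hu : PolyMap k u) :
    Irr k (u '' T) := by
  refine ⟨hT.1.image u, ?_⟩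
  rintro f hf g hg ⟨_, ⟨x, hx, rfl⟩, hfx⟩ ⟨_, ⟨y, hy, rfl⟩, hgy⟩
  obtain ⟨z, hz, h1, h2⟩ := hT.2 _ (hu.comp_poly hf) _ (hu.comp_poly hg) ⟨x, hx, hfx⟩ ⟨y, hy, hgy⟩
  exact ⟨_, ⟨z, hz, rfl⟩, h1, h2⟩

theorem Irr.univ [Infinite k] : Irr k (Set.univ : Set V) := by
  refine ⟨⟨0, trivial⟩, ?_⟩
  have key : ∀ f ∈ Poly k V, ∀ x z : V, ∃ p : Polynomial k, ∀ t : k, f (x + t • z) = p.eval t := by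
    intro f hf x z
    unfold Poly at hf
    induction hf using Algebra.adjoin_induction with
    | mem y hy =>
      obtain ⟨φ, rfl⟩ := hy
      exact ⟨Polynomial.C (φ x) + Polynomial.X * Polynomial.C (φ z), fun t => by simp; exact mul_comm _ _⟩
    | algebraMap r => exact ⟨Polynomial.C r, fun t => by simp⟩
    | add f g _ _ hx hy =>
      obtain ⟨p, hp⟩ := hx
      obtain ⟨q, hq⟩ := hy
      exact ⟨p + q, fun t => by simp [hp, hq]⟩
    | mul f g _ _ hx hy =>
      obtain ⟨p, hp⟩ := hx
      obtain ⟨q, hq⟩ := hy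
      exact ⟨p * q, fun t => by simp [hp, hq]⟩
  rintro f hf g hg ⟨x, -, hx⟩ ⟨y, -, hy⟩
  obtain ⟨p, hp⟩ := key f hf x (y - x)
  obtain ⟨q, hq⟩ := key g hg x (y - x)
  have hp0 : p ≠ 0 := by
    rintro rfl
    have := hp 0; simp at this; exact hx this
  have hq0 : q ≠ 0 := by
    rintro rfl
    have := hq 1; simp at this; exact hy this
  obtain ⟨t, ht⟩ : ∃ t, (p * q).eval t ≠ 0 := by
    by_contra! hcon
    exact mul_ne_zero hp0 hq0 (Polynomial.funext (fun t => by simpa using hcon t))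
  rw [Polynomial.eval_mul] at ht
  exact ⟨x + t • (y - x), trivial, by rw [hp]; exact left_ne_zero_of_mul ht,
    by rw [hq]; exact right_ne_zero_of_mul ht⟩

theorem Irr.prod {T : Set V} {T' : Set V'} (hT : Irr k T) (hT' : Irr k T') :
    Irr k (T ×ˢ T') := by
  refine ⟨hT.1.prod hT'.1, ?_⟩
  rintro f hf g hg ⟨⟨x, x'⟩, ⟨hx, hx'⟩, hfx⟩ ⟨⟨y, y'⟩, ⟨hy, hy'⟩, hgy⟩
  have h1 : ∀ c : V', PolyMap k (fun v : V => (v, c)) := fun c =>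
    PolyMap.id.prodMk (PolyMap.const c)
  have h2 : ∀ c : V, PolyMap k (fun v : V' => (c, v)) := fun c =>
    (PolyMap.const c).prodMk PolyMap.id
  obtain ⟨z, hz, hz1, hz2⟩ := hT.2 _ ((h1 x').comp_poly hf) _ ((h1 y').comp_poly hg)
    ⟨x, hx, hfx⟩ ⟨y, hy, hgy⟩
  obtain ⟨z', hz', hz1', hz2'⟩ := hT'.2 _ ((h2 z).comp_poly hf) _ ((h2 z).comp_poly hg)
    ⟨x', hx', hz1⟩ ⟨y', hy', hz2⟩
  exact ⟨(z, z'), ⟨hz, hz'⟩, hz1', hz2'⟩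

/-- `r ≤ rank` is an open condition. -/
theorem open_rank {A : V → (M₁ →ₗ[k] M₂)} (hA : PolyMap k A) (r : ℕ) (t₀ : V)
    (h0 : r ≤ finrank k (LinearMap.range (A t₀))) :
    ∃ g ∈ Poly k V, g t₀ ≠ 0 ∧ ∀ t, g t ≠ 0 → r ≤ finrank k (LinearMap.range (A t)) := by
  obtain ⟨w, hw⟩ := exists_linearIndependent_of_le_finrank h0
  choose y hy using fun i => (w i).2
  have hw' : LinearIndependent k (fun i => A t₀ (y i)) := by
    have : (fun i => A t₀ (y i)) = (LinearMap.range (A t₀)).subtype ∘ w := by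
      ext i; simp [hy]
    rw [this]
    exact hw.map' _ (by simp)
  let Q : (Fin r → k) →ₗ[k] M₁ := Fintype.linearCombination k y
  have hinj : LinearMap.ker (A t₀ ∘ₗ Q) = ⊥ := by
    rw [LinearMap.ker_eq_bot']
    intro c hc
    have := Fintype.linearIndependent_iff.1 hw' c (by simpa [Q, Fintype.linearCombination_apply] using hc)
    ext i; exact this i
  obtain ⟨P, hP⟩ := LinearMap.exists_leftInverse_of_injective _ hinj
  refine ⟨fun t => LinearMap.det (P ∘ₗ (A t ∘ₗ Q)), ?_, ?_, ?_⟩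
  · exact PolyMap.det ((PolyMap.const P).lcomp (hA.lcomp (PolyMap.const Q)))
  · simp [hP]
  · intro t ht
    have hu : Function.Injective (P ∘ₗ (A t ∘ₗ Q)) :=
      (LinearMap.equivOfDetNeZero _ ht).injective
    have hu2 : Function.Injective (A t ∘ₗ Q) := by
      rw [LinearMap.coe_comp] at hu
      exact hu.of_comp
    have := LinearMap.finrank_range_of_inj hu2
    rw [finrank_fin_fun] at this
    rw [← this]
    exact Submodule.finrank_mono (LinearMap.range_comp_le_range _ _)

end Poly
end GeomIrr

namespace GeomIrr
open Module
set_option linter.all false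

section LinAlg
variable {k : Type*} [Field k]
variable {M M' : Type*} [AddCommGroup M] [Module k M] [AddCommGroup M'] [Module k M']

theorem exists_adapted_compl (N F : Submodule k M) :
    ∃ G, IsCompl F G ∧ ∀ x ∈ N, ∃ a ∈ N ⊓ F, ∃ b ∈ N ⊓ G, a + b = x := by
  obtain ⟨C', hC'⟩ := Submodule.exists_isCompl (F.comap N.subtype)
  set C := C'.map N.subtype with hC
  have hCN : C ≤ N := Submodule.map_subtype_le _ _
  have hdis : Disjoint F C := by
    rw [Submodule.disjoint_def]
    rintro x hxF ⟨y, hy, rfl⟩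
    have := (Submodule.disjoint_def.1 hC'.disjoint) y hxF hy
    simp [this]
  obtain ⟨G, hG, hcompl⟩ := hdis.symm.exists_isCompl
  refine ⟨G, hcompl.symm, fun x hx => ?_⟩
  have : (⟨x, hx⟩ : N) ∈ F.comap N.subtype ⊔ C' := by rw [hC'.sup_eq_top]; trivial
  obtain ⟨a, ha, b, hb, hab⟩ := Submodule.mem_sup.1 this
  refine ⟨a, ⟨a.2, ha⟩, b, ⟨b.2, hG ⟨b, hb, rfl⟩⟩, ?_⟩
  have := congrArg N.subtype hab
  simpa using this

theorem exists_proj (N F : Submodule k M) :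
    ∃ π : M →ₗ[k] F, (∀ x : F, π x = x) ∧ ∀ x ∈ N, (π x : M) ∈ N := by
  obtain ⟨G, hG, h⟩ := exists_adapted_compl N F
  refine ⟨F.projectionOnto G hG, fun x => F.projectionOnto_apply_left hG x, fun x hx => ?_⟩
  obtain ⟨a, ha, b, hb, rfl⟩ := h x hx
  rw [map_add, F.projectionOnto_apply_of_mem_left hG ha.2]
  have : F.projectionOnto G hG b = 0 := (Submodule.projectionOnto_apply_eq_zero_iff hG).2 hb.2
  simp [this]
  exact ha.1

theorem exists_equiv_map [FiniteDimensional k M] [FiniteDimensional k M']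
    (N : Submodule k M) (N' : Submodule k M')
    (h : finrank k M = finrank k M') (h' : finrank k N = finrank k N') :
    ∃ f : M ≃ₗ[k] M', ∀ x, f x ∈ N' ↔ x ∈ N := by
  obtain ⟨G, hG⟩ := N.exists_isCompl
  obtain ⟨G', hG'⟩ := N'.exists_isCompl
  have h1 := Submodule.finrank_add_eq_of_isCompl hG
  have h2 := Submodule.finrank_add_eq_of_isCompl hG'
  let a : N ≃ₗ[k] N' := LinearEquiv.ofFinrankEq _ _ h'
  let b : G ≃ₗ[k] G' := LinearEquiv.ofFinrankEq _ _ (by omega)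
  let f : M ≃ₗ[k] M' := (Submodule.prodEquivOfIsCompl N G hG).symm.trans
    ((a.prodCongr b).trans (Submodule.prodEquivOfIsCompl N' G' hG'))
  have hf : ∀ x, f x ∈ N' ↔ x ∈ N := by
    intro x
    rw [← Submodule.prodEquivOfIsCompl_symm_apply_snd_eq_zero N G hG,
      ← Submodule.prodEquivOfIsCompl_symm_apply_snd_eq_zero N' G' hG']
    simp [f]
  exact ⟨f, hf⟩

theorem finrank_split [FiniteDimensional k M] {N F G : Submodule k M} (hG : IsCompl F G)
    (h : ∀ x ∈ N, ∃ a ∈ N ⊓ F, ∃ b ∈ N ⊓ G, a + b = x) :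
    finrank k (N ⊓ F : Submodule k M) + finrank k (N ⊓ G : Submodule k M) = finrank k N := by
  have h1 : (N ⊓ F) ⊔ (N ⊓ G) = N := by
    apply le_antisymm (sup_le inf_le_left inf_le_left)
    intro x hx
    obtain ⟨a, ha, b, hb, rfl⟩ := h x hx
    exact Submodule.add_mem_sup ha hb
  have h2 : (N ⊓ F) ⊓ (N ⊓ G) = ⊥ := by
    rw [eq_bot_iff, ← hG.inf_eq_bot]
    exact inf_le_inf inf_le_right inf_le_right
  have := Submodule.finrank_sup_add_finrank_inf_eq (N ⊓ F) (N ⊓ G)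
  rw [h1, h2] at this
  simp at this
  omega

theorem finrank_comap_subtype (N F : Submodule k M) :
    finrank k (N.comap F.subtype) = finrank k (N ⊓ F : Submodule k M) := by
  rw [← Submodule.finrank_map_subtype_eq F (N.comap F.subtype), Submodule.map_comap_subtype,
    inf_comm]

theorem exists_equiv_pair [FiniteDimensional k M] (N F F' : Submodule k M)
    (h : finrank k F = finrank k F')
    (h' : finrank k (N ⊓ F : Submodule k M) = finrank k (N ⊓ F' : Submodule k M)) :
    ∃ f : M ≃ₗ[k] M, (∀ x ∈ N, f x ∈ N) ∧ (∀ x ∈ F, f x ∈ F') := by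
  obtain ⟨G, hG, hN⟩ := exists_adapted_compl N F
  obtain ⟨G', hG', hN'⟩ := exists_adapted_compl N F'
  have h1 := finrank_split hG hN
  have h2 := finrank_split hG' hN'
  have h3 := Submodule.finrank_add_eq_of_isCompl hG
  have h4 := Submodule.finrank_add_eq_of_isCompl hG'
  obtain ⟨a, ha⟩ := exists_equiv_map (N.comap F.subtype) (N.comap F'.subtype) h
    (by rw [finrank_comap_subtype, finrank_comap_subtype, h'])
  obtain ⟨b, hb⟩ := exists_equiv_map (N.comap G.subtype) (N.comap G'.subtype) (by omega)
    (by rw [finrank_comap_subtype, finrank_comap_subtype]; omega)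
  let f : M ≃ₗ[k] M := (Submodule.prodEquivOfIsCompl F G hG).symm.trans
    ((a.prodCongr b).trans (Submodule.prodEquivOfIsCompl F' G' hG'))
  have fl : ∀ x : F, f x = a x := fun x => by simp [f]
  have fr : ∀ x : G, f x = b x := fun x => by simp [f]
  refine ⟨f, fun x hx => ?_, fun x hx => ?_⟩
  · obtain ⟨y, hy, z, hz, rfl⟩ := hN x hx
    rw [map_add]
    refine N.add_mem ?_ ?_
    · have := (ha ⟨y, hy.2⟩).2 hy.1
      rw [fl ⟨y, hy.2⟩]; exact this
    · have := (hb ⟨z, hz.2⟩).2 hz.1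
      rw [fr ⟨z, hz.2⟩]; exact this
  · rw [fl ⟨x, hx⟩]; exact (a _).2

theorem finrank_map_add_inf_ker [FiniteDimensional k M] [FiniteDimensional k M']
    (N : Submodule k M) (f : M →ₗ[k] M') :
    finrank k (N.map f) + finrank k (N ⊓ LinearMap.ker f : Submodule k M) = finrank k N := by
  have h := LinearMap.finrank_range_add_finrank_ker (f ∘ₗ N.subtype)
  rw [LinearMap.range_comp, Submodule.range_subtype, LinearMap.ker_comp,
    finrank_comap_subtype, inf_comm] at h
  exact h

theorem hyperplane [FiniteDimensional k M] {N : Submodule k M} {φ : Dual k M} {n : M} (hn : n ∈ N)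
    (h : φ n ≠ 0) :
    finrank k (N ⊓ LinearMap.ker φ : Submodule k M) + 1 = finrank k N := by
  have h1 := finrank_map_add_inf_ker N φ
  have : N.map φ = ⊤ := by
    rw [eq_top_iff]
    intro c _
    exact ⟨(c / φ n) • n, N.smul_mem _ hn, by simp [h]⟩
  rw [this] at h1
  simp at h1
  omega

theorem finrank_ker_pow_le [FiniteDimensional k M] (W : End k M) (j : ℕ) :
    finrank k (LinearMap.ker (W ^ j)) ≤ j * finrank k (LinearMap.ker W) := by
  induction j with
  | zero => simp [End.one_eq_id]
  | succ j ih =>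
    have h := finrank_map_add_inf_ker (LinearMap.ker (W ^ (j+1))) W
    have h1 : (LinearMap.ker (W ^ (j+1))).map W ≤ LinearMap.ker (W ^ j) := by
      rintro _ ⟨x, hx, rfl⟩
      have : (W ^ (j+1)) x = 0 := hx
      rw [pow_succ] at this
      exact this
    have h2 := Submodule.finrank_mono h1
    have h3 : finrank k (LinearMap.ker (W ^ (j+1)) ⊓ LinearMap.ker W : Submodule k M) ≤ _ :=
      Submodule.finrank_mono inf_le_right
    rw [add_mul]; omega

theorem finrank_le_of_pow_eq_zero [FiniteDimensional k M] {W : End k M} {m : ℕ} (h : W ^ m = 0) :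
    finrank k M ≤ m * finrank k (LinearMap.ker W) := by
  have := finrank_ker_pow_le W m
  rw [h, LinearMap.ker_zero, finrank_top] at this
  exact this

theorem mul_finrank_range_le [FiniteDimensional k M] {W : End k M} {m : ℕ} (h : W ^ (m+1) = 0) :
    (m + 1) * finrank k (LinearMap.range (W ^ m)) ≤ finrank k M := by
  have key : ∀ j ≤ m, (j + 1) * finrank k (LinearMap.range (W ^ m)) ≤
      finrank k (LinearMap.range (W ^ (m - j))) := by
    intro j
    induction j with
    | zero => intro _; simp
    | succ j ih =>
      intro hj
      have ih := ih (by omega)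
      have h1 := finrank_map_add_inf_ker (LinearMap.range (W ^ (m - (j+1)))) W
      have h2 : (LinearMap.range (W ^ (m - (j+1)))).map W = LinearMap.range (W ^ (m - j)) := by
        rw [← LinearMap.range_comp, ← End.mul_eq_comp, ← pow_succ']
        congr 2; omega
      have h3 : LinearMap.range (W ^ m) ≤ LinearMap.range (W ^ (m - (j+1))) ⊓ LinearMap.ker W := by
        rintro _ ⟨x, rfl⟩
        constructor
        · refine ⟨(W ^ (j+1)) x, ?_⟩
          rw [← End.mul_apply, ← pow_add]; congr 2; omega
        · show W ((W ^ m) x) = 0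
          rw [← End.mul_apply, ← pow_succ', h]; rfl
      have h4 := Submodule.finrank_mono h3
      rw [h2] at h1
      rw [add_mul]; omega
  have := key m le_rfl
  rw [Nat.sub_self, pow_zero, End.one_eq_id, LinearMap.range_id, finrank_top] at this
  exact this

theorem restrict_pow_apply {N : Submodule k M} {W : End k M} (hN : ∀ x ∈ N, W x ∈ N) (j : ℕ)
    (x : N) : (((W.restrict hN) ^ j) x : M) = (W ^ j) x := by
  induction j generalizing x with
  | zero => simp
  | succ j ih => rw [pow_succ, pow_succ, End.mul_apply, End.mul_apply, ih]; rfl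

theorem mul_finrank_map_le [FiniteDimensional k M] {W : End k M} {m : ℕ} (h : W ^ (m+1) = 0)
    {N : Submodule k M} (hN : ∀ x ∈ N, W x ∈ N) :
    (m + 1) * finrank k (N.map (W ^ m)) ≤ finrank k N := by
  have h1 : (W.restrict hN) ^ (m+1) = 0 := by
    ext x; rw [restrict_pow_apply, h]; rfl
  have h2 := mul_finrank_range_le h1
  have h3 : N.map (W ^ m) = (LinearMap.range ((W.restrict hN) ^ m)).map N.subtype := by
    ext y
    constructor
    · rintro ⟨x, hx, rfl⟩
      exact ⟨_, ⟨⟨x, hx⟩, rfl⟩, by simp [restrict_pow_apply]⟩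
    · rintro ⟨_, ⟨x, rfl⟩, rfl⟩
      exact ⟨x, x.2, by simp [restrict_pow_apply]⟩
  rw [h3, Submodule.finrank_map_subtype_eq]
  exact h2

theorem finrank_map_mkQ [FiniteDimensional k M] (N S : Submodule k M) :
    finrank k (S.map N.mkQ) + finrank k N = finrank k (S ⊔ N : Submodule k M) := by
  have h := finrank_map_add_inf_ker (S ⊔ N) N.mkQ
  rw [Submodule.ker_mkQ, inf_eq_right.2 le_sup_right, Submodule.map_sup, Submodule.mkQ_map_self, sup_bot_eq] at h
  exact h

theorem quot_bound [FiniteDimensional k M] {W : End k M} {m : ℕ} (h : W ^ m = 0)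
    {N : Submodule k M} (hN : ∀ x ∈ N, W x ∈ N) :
    finrank k M + m * finrank k (LinearMap.range W ⊔ N : Submodule k M)
      ≤ finrank k N + m * finrank k M := by
  let Q : End k (M ⧸ N) := N.mapQ N W hN
  have hQ : ∀ j, ∀ x, (Q ^ j) (N.mkQ x) = N.mkQ ((W ^ j) x) := by
    intro j
    induction j with
    | zero => intro x; simp
    | succ j ih =>
      intro x
      rw [pow_succ, pow_succ, End.mul_apply, End.mul_apply, ← ih]; rfl
  have hQm : Q ^ m = 0 := by
    ext x
    have := hQ m x
    rw [h] at this
    simpa using this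
  have h1 := finrank_le_of_pow_eq_zero hQm
  have h2 := LinearMap.finrank_range_add_finrank_ker Q
  have h3 : LinearMap.range Q = (LinearMap.range W).map N.mkQ := by
    ext y
    constructor
    · rintro ⟨x, rfl⟩
      obtain ⟨x, rfl⟩ := N.mkQ_surjective x
      exact ⟨W x, ⟨x, rfl⟩, rfl⟩
    · rintro ⟨_, ⟨x, rfl⟩, rfl⟩
      exact ⟨N.mkQ x, rfl⟩
  have h4 := finrank_map_mkQ N (LinearMap.range W)
  have h5 := N.finrank_quotient_add_finrank
  rw [h3] at h2
  have h6 : m * finrank k (LinearMap.ker Q) +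
    m * finrank k (LinearMap.range W ⊔ N : Submodule k M) = m * finrank k M := by
    rw [← mul_add]; congr 1; omega
  omega

end LinAlg
end GeomIrr

namespace GeomIrr
open Module
set_option linter.all false

section Ex
variable {k : Type*} [Field k]
variable {M M' : Type*} [AddCommGroup M] [Module k M] [FiniteDimensional k M]

theorem exists_nilp (m c : ℕ) (h : (m + 2) * c ≤ finrank k M) :
    ∃ V : End k M, V ^ (m + 2) = 0 ∧ finrank k (LinearMap.range (V ^ (m + 1))) = c := by
  let b := Module.finBasis k M
  let b' : ℕ → M := fun i => if hi : i < (m + 2) * c then b ⟨i, by omega⟩ else 0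
  let V : End k M := b.constr k (fun i => b' (i + c))
  have hVb : ∀ i, V (b i) = b' (i + c) := fun i => by simp [V]
  have hVb' : ∀ i, V (b' i) = b' (i + c) := by
    intro i
    by_cases hi : i < (m + 2) * c
    · simp only [b', dif_pos hi, hVb]
    · have : ¬ (i + c < (m + 2) * c) := by omega
      simp only [b', dif_neg hi, dif_neg this, map_zero]
  have hpow : ∀ j i, (V ^ (j + 1)) (b i) = b' (i + (j + 1) * c) := by
    intro j i
    induction j with
    | zero => simp [hVb]
    | succ j ih =>
      rw [pow_succ', End.mul_apply, ih, hVb']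
      congr 1; ring
  refine ⟨V, ?_, ?_⟩
  · apply b.ext
    intro i
    rw [hpow]
    have : ¬ ((i : ℕ) + (m + 1 + 1) * c < (m + 2) * c) := by
      have : (m + 1 + 1) * c = (m + 2) * c := by ring
      omega
    simp only [b', dif_neg this]; rfl
  · have hlt : ∀ i : Fin c, (i : ℕ) + (m + 1) * c < (m + 2) * c := fun i => by
      have : (m + 2) * c = (m + 1) * c + c := by ring
      have := i.2
      omega
    let w : Fin c → M := fun i => b ⟨i + (m + 1) * c, (hlt i).trans_le h⟩
    have hw : LinearIndependent k w := by
      refine b.linearIndependent.comp (fun i : Fin c => (⟨i + (m + 1) * c, (hlt i).trans_le h⟩ : Fin _)) ?_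
      intro i j hij
      simp at hij
      exact Fin.ext hij
    have hr : LinearMap.range (V ^ (m + 1)) = Submodule.span k (Set.range w) := by
      apply le_antisymm
      · rw [LinearMap.range_eq_map, ← b.span_eq, Submodule.map_span, Submodule.span_le]
        rintro _ ⟨_, ⟨i, rfl⟩, rfl⟩
        rw [hpow]
        by_cases hi : (i : ℕ) + (m + 1) * c < (m + 2) * c
        · apply Submodule.subset_span
          have hi2 : (i : ℕ) < c := by
            have : (m + 2) * c = (m + 1) * c + c := by ring
            omega
          refine ⟨⟨i, hi2⟩, ?_⟩
          simp only [w, b', dif_pos hi]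
        · simp only [b', dif_neg hi]
          exact Submodule.zero_mem _
      · rw [Submodule.span_le]
        rintro _ ⟨i, rfl⟩
        have hi : (i : ℕ) < finrank k M := by
          have := hlt i; omega
        refine ⟨b ⟨i, hi⟩, ?_⟩
        rw [hpow]
        simp only [w, b', dif_pos (hlt i)]
    rw [hr, finrank_span_eq_card hw, Fintype.card_fin]

theorem exists_nilp_le (m c : ℕ) (h : (m + 1) * c ≤ finrank k M) :
    ∃ V : End k M, V ^ (m + 1) = 0 ∧ c ≤ finrank k (LinearMap.range (V ^ m)) := by
  cases m with
  | zero =>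
    refine ⟨0, by simp, ?_⟩
    rw [pow_zero, End.one_eq_id, LinearMap.range_id, finrank_top]; omega
  | succ m =>
    obtain ⟨V, h1, h2⟩ := exists_nilp m c h
    exact ⟨V, h1, h2.ge⟩

theorem conj_pow (f : M ≃ₗ[k] M) (V : End k M) (j : ℕ) :
    ((f.symm : M →ₗ[k] M) ∘ₗ V ∘ₗ (f : M →ₗ[k] M) : End k M) ^ j =
      (f.symm : M →ₗ[k] M) ∘ₗ (V ^ j) ∘ₗ (f : M →ₗ[k] M) := by
  induction j with
  | zero => ext x; simp
  | succ j ih => rw [pow_succ, ih, pow_succ]; ext x; simp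

theorem exists_nilp_adapted (m c : ℕ) (h : (m + 2) * c ≤ finrank k M) (N : Submodule k M)
    (hN : finrank k N + c = finrank k M) :
    ∃ V : End k M, (∀ x, V x ∈ N) ∧ (∀ x ∈ N, (V ^ (m + 1)) x = 0) ∧
      finrank k (LinearMap.range (V ^ (m + 1))) = c := by
  obtain ⟨V, h1, h2⟩ := exists_nilp m c h
  have h3 := LinearMap.finrank_range_add_finrank_ker (V ^ (m + 1))
  obtain ⟨f, hf⟩ := exists_equiv_map N (LinearMap.ker (V ^ (m + 1))) rfl (by omega)
  refine ⟨(f.symm : M →ₗ[k] M) ∘ₗ V ∘ₗ (f : M →ₗ[k] M), fun x => ?_, fun x hx => ?_, ?_⟩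
  · rw [← hf]
    simp
    rw [← End.mul_apply, ← pow_succ, h1]; rfl
  · rw [conj_pow]
    have := (hf x).2 hx
    simpa using this
  · rw [conj_pow, LinearMap.range_comp, LinearMap.range_comp, LinearEquiv.range, Submodule.map_top]
    rw [← h2]
    exact LinearEquiv.finrank_map_eq f.symm _

end Ex

section Sets
variable {k : Type*} [Field k]
variable {M : Type*} [AddCommGroup M] [Module k M]

/-- Nilpotent endomorphisms preserving a subspace. -/
def XX (m : ℕ) (N : Submodule k M) : Set (End k M) :=
  {W | W ^ m = 0 ∧ ∀ x ∈ N, W x ∈ N}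

/-- Auxiliary strata. -/
def LL (m : ℕ) (N F : Submodule k M) : Set (End k M) :=
  {W | (∀ x, W x ∈ F) ∧ (∀ x ∈ N, W x ∈ N) ∧ ∀ x ∈ F, (W ^ m) x = 0}

theorem LL_subset {m : ℕ} {N F : Submodule k M} : LL m N F ⊆ XX (m + 1) N := by
  rintro W ⟨h1, h2, h3⟩
  refine ⟨?_, h2⟩
  ext x
  rw [pow_succ, End.mul_apply]
  exact h3 _ (h1 x)

theorem Irr.submodule [Infinite k] (Z : Submodule k M) : Irr k (Z : Set M) := by
  have := (Irr.univ (k := k) (V := Z)).image (PolyMap.linear Z.subtype)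
  simpa using this

theorem Irr.LL [Infinite k] [FiniteDimensional k M] {m : ℕ} {N F : Submodule k M}
    (h : Irr k (XX m (N.comap F.subtype))) : Irr k (LL m N F) := by
  obtain ⟨π, hπ, hπN⟩ := exists_proj N F
  let Z : Submodule k (End k M) :=
    { carrier := {z | (∀ x, z x ∈ F) ∧ (∀ x ∈ N, z x ∈ N) ∧ ∀ x ∈ F, z x = 0}
      add_mem' := by
        rintro a b ⟨a1, a2, a3⟩ ⟨b1, b2, b3⟩
        exact ⟨fun x => F.add_mem (a1 x) (b1 x), fun x hx => N.add_mem (a2 x hx) (b2 x hx),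
          fun x hx => by simp [a3 x hx, b3 x hx]⟩
      zero_mem' := ⟨fun x => F.zero_mem, fun x _ => N.zero_mem, fun x _ => rfl⟩
      smul_mem' := by
        rintro c a ⟨a1, a2, a3⟩
        exact ⟨fun x => F.smul_mem _ (a1 x), fun x hx => N.smul_mem _ (a2 x hx),
          fun x hx => by simp [a3 x hx]⟩ }
  have h1 := h.prod (Irr.submodule Z)
  have hu : PolyMap k (fun p : End k F × End k M =>
      ((F.subtype ∘ₗ p.1 ∘ₗ π + p.2 : End k M))) := by
    have ha : PolyMap k (fun p : End k F × End k M => (p.1 : F →ₗ[k] F)) :=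
      PolyMap.linear (LinearMap.fst k (End k F) (End k M))
    have hb : PolyMap k (fun p : End k F × End k M => (p.2 : M →ₗ[k] M)) :=
      PolyMap.linear (LinearMap.snd k (End k F) (End k M))
    exact ((PolyMap.const F.subtype).lcomp (ha.lcomp (PolyMap.const π))).add hb
  have h2 := h1.image hu
  convert h2 using 1
  ext W
  constructor
  · rintro ⟨W1, W2, W3⟩
    let w : End k F := (W ∘ₗ F.subtype).codRestrict F (fun x => W1 x)
    have hw : ∀ x : F, ((w x : F) : M) = W x := fun x => rfl
    have hwp : ∀ j, ∀ x : F, (((w ^ j) x : F) : M) = (W ^ j) x := by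
      intro j
      induction j with
      | zero => intro x; simp
      | succ j ih => intro x; rw [pow_succ, pow_succ, End.mul_apply, End.mul_apply, ih, hw]
    refine ⟨(w, W - F.subtype ∘ₗ w ∘ₗ π), ⟨⟨?_, ?_⟩, ?_, ?_, ?_⟩, ?_⟩
    · ext x; rw [hwp, W3 x x.2]; rfl
    · intro x hx; exact W2 _ hx
    · intro x
      exact F.sub_mem (W1 x) (w (π x)).2
    · intro x hx
      exact N.sub_mem (W2 x hx) (W2 _ (hπN x hx))
    · intro x hx
      show W x - W (π x) = 0
      have := hπ ⟨x, hx⟩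
      simp at this
      rw [this]; simp
    · simp
  · rintro ⟨⟨w, z⟩, ⟨⟨w1, w2⟩, z1, z2, z3⟩, rfl⟩
    have e1 : ∀ x : F, ((F.subtype ∘ₗ w ∘ₗ π + z : End k M)) x = w x := by
      intro x
      simp only [LinearMap.add_apply, LinearMap.comp_apply, z3 x x.2, hπ]
      simp
    have e2 : ∀ j, ∀ x : F, ((F.subtype ∘ₗ w ∘ₗ π + z : End k M) ^ j) x = (w ^ j) x := by
      intro j
      induction j with
      | zero => intro x; simp
      | succ j ih => intro x; rw [pow_succ, pow_succ, End.mul_apply, End.mul_apply, e1, ih]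
    refine ⟨fun x => ?_, fun x hx => ?_, fun x hx => ?_⟩
    · exact F.add_mem (w (π x)).2 (z1 x)
    · exact N.add_mem (w2 _ (hπN x hx)) (z2 x hx)
    · have := e2 m ⟨x, hx⟩
      rw [w1] at this
      simpa using this

end Sets

section Psi
variable {k : Type*} [Field k]
variable {M : Type*} [AddCommGroup M] [Module k M]

theorem exists_gen_inv (T : End k M) : ∃ σ : End k M, T * σ * T = T := by
  obtain ⟨s, hs⟩ := LinearMap.exists_rightInverse_of_surjective T.rangeRestrict
    (LinearMap.range_rangeRestrict T)
  obtain ⟨g, hg⟩ := LinearMap.exists_extend s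
  refine ⟨g, ?_⟩
  ext x
  have h1 : g (T x) = s (T.rangeRestrict x) := by
    rw [← hg]; rfl
  have h2 := congrArg Subtype.val (LinearMap.congr_fun hs (T.rangeRestrict x))
  simp only [End.mul_apply, h1]
  exact h2

theorem psum_comm {A : Type*} [Ring A] {a : A} {b c : A} {m : ℕ} (ha : a ^ (m + 1) = 0)
    (hc : c ^ (m + 1) = 0) :
    a * (∑ i ∈ Finset.range (m + 1), a ^ (m - i) * b * c ^ i) =
      (∑ i ∈ Finset.range (m + 1), a ^ (m - i) * b * c ^ i) * c := by
  rw [Finset.mul_sum, Finset.sum_mul, Finset.sum_range_succ', Finset.sum_range_succ]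
  have h1 : a * (a ^ (m - 0) * b * c ^ 0) = 0 := by
    rw [Nat.sub_zero, ← mul_assoc, ← mul_assoc, ← pow_succ', ha]; simp
  have h2 : a ^ (m - m) * b * c ^ m * c = 0 := by
    rw [mul_assoc _ (c ^ m) c, ← pow_succ, hc]; simp
  rw [h1, h2]
  congr 1
  refine Finset.sum_congr rfl fun i hi => ?_
  have : m - i = (m - (i + 1)) + 1 := by
    have := Finset.mem_range.1 hi; omega
  rw [this, pow_succ' a (m - (i + 1)), pow_succ c i]
  simp only [mul_assoc]

theorem exists_psi {W : End k M} {m : ℕ} (h : W ^ (m + 2) = 0)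
    (hr : LinearMap.range W = LinearMap.ker (W ^ (m + 1))) :
    ∃ ψ : End k M, ∑ i ∈ Finset.range (m + 2), W ^ (m + 1 - i) * ψ * W ^ i = 1 := by
  obtain ⟨σ, hσ⟩ := exists_gen_inv (W ^ (m + 1))
  set c := ∑ i ∈ Finset.range (m + 2), W ^ (m + 1 - i) * σ * W ^ i with hc
  have hcomm : W * c = c * W := psum_comm (m := m + 1) h h
  have h1 : W ^ (m + 1) * c = W ^ (m + 1) := by
    rw [hc, Finset.mul_sum, Finset.sum_range_succ, Finset.sum_eq_zero]
    · simp only [Nat.sub_self, pow_zero, one_mul, zero_add, ← mul_assoc]; exact hσ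
    · intro i hi
      have hi := Finset.mem_range.1 hi
      rw [← mul_assoc, ← mul_assoc, ← pow_add]
      have : m + 1 + (m + 1 - i) = (m + 2) + (m - i) := by omega
      rw [this, pow_add, h]; simp
  have h2 : ∀ x, (c - 1) x ∈ LinearMap.range W := by
    intro x
    rw [hr, LinearMap.mem_ker, ← End.mul_apply, mul_sub, h1, mul_one, sub_self]; rfl
  obtain ⟨s', hs'⟩ := LinearMap.exists_rightInverse_of_surjective W.rangeRestrict
    (LinearMap.range_rangeRestrict W)
  let s : End k M := s' ∘ₗ (LinearMap.codRestrict (LinearMap.range W) (c - 1) h2)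
  have hs : c - 1 = W * s := by
    ext x
    have := congrArg Subtype.val (LinearMap.congr_fun hs'
      (LinearMap.codRestrict (LinearMap.range W) (c - 1) h2 x))
    exact this.symm
  have hcomm' : Commute (c - 1) W := by
    show (c - 1) * W = W * (c - 1)
    rw [sub_mul, mul_sub, hcomm]; simp
  have h3 : ∀ j, (c - 1) ^ j = W ^ j * s ^ j := by
    intro j
    induction j with
    | zero => simp
    | succ j ih =>
      rw [pow_succ' (c - 1), ih, ← mul_assoc, (hcomm'.pow_right j).eq, hs, mul_assoc, mul_assoc,
        ← pow_succ', pow_succ W, mul_assoc]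
  have hu : IsUnit c := by
    have : IsNilpotent (c - 1) := ⟨m + 2, by rw [h3, h, zero_mul]⟩
    simpa using this.isUnit_add_one
  obtain ⟨u, hu⟩ := hu
  have hinv : Commute ((u⁻¹ : (End k M)ˣ) : End k M) W := by
    have : Commute (u : End k M) W := by rw [hu]; exact hcomm.symm
    exact this.units_inv_left
  refine ⟨σ * ((u⁻¹ : (End k M)ˣ) : End k M), ?_⟩
  have : ∀ i ∈ Finset.range (m + 2), W ^ (m + 1 - i) * (σ * ((u⁻¹ : (End k M)ˣ) : End k M)) * W ^ i
      = W ^ (m + 1 - i) * σ * W ^ i * ((u⁻¹ : (End k M)ˣ) : End k M) := by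
    intro i _
    rw [mul_assoc, mul_assoc, (hinv.pow_right i).eq]
    simp only [mul_assoc]
  rw [Finset.sum_congr rfl this, ← Finset.sum_mul, ← hc, ← hu]
  simp

end Psi
end GeomIrr

namespace GeomIrr
open Module
set_option linter.all false

section Step
variable {k : Type*} [Field k]
variable {M : Type*} [AddCommGroup M] [Module k M] [FiniteDimensional k M]

theorem open_map (N : Submodule k M) (j r : ℕ) (W₁ : End k M)
    (h : r ≤ finrank k (N.map (W₁ ^ j))) :
    ∃ g ∈ Poly k (End k M), g W₁ ≠ 0 ∧ ∀ W, g W ≠ 0 → r ≤ finrank k (N.map (W ^ j)) := by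
  have hp : PolyMap k (fun W : End k M => ((W ^ j : End k M) ∘ₗ N.subtype : N →ₗ[k] M)) :=
    PolyMap.lcomp (PolyMap.epow PolyMap.id j) (PolyMap.const N.subtype)
  have e : ∀ W : End k M, LinearMap.range ((W ^ j : End k M) ∘ₗ N.subtype : N →ₗ[k] M) =
      N.map (W ^ j) := fun W => by rw [LinearMap.range_comp, Submodule.range_subtype]
  obtain ⟨g, hg, h1, h2⟩ := open_rank hp r W₁ (by rw [e]; exact h)
  exact ⟨g, hg, h1, fun W hW => (h2 W hW).trans_eq (by rw [e])⟩

theorem open_range (j r : ℕ) (W₁ : End k M)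
    (h : r ≤ finrank k (LinearMap.range (W₁ ^ j))) :
    ∃ g ∈ Poly k (End k M), g W₁ ≠ 0 ∧ ∀ W, g W ≠ 0 → r ≤ finrank k (LinearMap.range (W ^ j)) := by
  obtain ⟨g, hg, h1, h2⟩ := open_map ⊤ j r W₁ (by rw [← LinearMap.range_eq_map]; exact h)
  exact ⟨g, hg, h1, fun W hW => (h2 W hW).trans_eq (by rw [← LinearMap.range_eq_map])⟩

theorem open_sup (N : Submodule k M) (j r : ℕ) (W₁ : End k M)
    (h : r ≤ finrank k (LinearMap.range (W₁ ^ j) ⊔ N : Submodule k M)) :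
    ∃ g ∈ Poly k (End k M), g W₁ ≠ 0 ∧ ∀ W, g W ≠ 0 →
      r ≤ finrank k (LinearMap.range (W ^ j) ⊔ N : Submodule k M) := by
  have hp : PolyMap k (fun W : End k M =>
      ((W ^ j : End k M) ∘ₗ LinearMap.fst k M N + N.subtype ∘ₗ LinearMap.snd k M N
        : M × N →ₗ[k] M)) :=
    (PolyMap.lcomp (PolyMap.epow PolyMap.id j) (PolyMap.const _)).add (PolyMap.const _)
  have e : ∀ W : End k M, LinearMap.range
      ((W ^ j : End k M) ∘ₗ LinearMap.fst k M N + N.subtype ∘ₗ LinearMap.snd k M N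
        : M × N →ₗ[k] M) = LinearMap.range (W ^ j) ⊔ N := fun W => by
    have : ((W ^ j : End k M) ∘ₗ LinearMap.fst k M N + N.subtype ∘ₗ LinearMap.snd k M N
        : M × N →ₗ[k] M) = LinearMap.coprod (W ^ j) N.subtype := rfl
    rw [this, LinearMap.range_coprod, Submodule.range_subtype]
  obtain ⟨g, hg, h1, h2⟩ := open_rank hp r W₁ (by rw [e]; exact h)
  exact ⟨g, hg, h1, fun W hW => (h2 W hW).trans_eq (by rw [e])⟩

theorem Irr.mul {V : Type*} [AddCommGroup V] [Module k V] {T : Set V} (hT : Irr k T) {f g : V → k}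
    (hf : f ∈ Poly k V) (hg : g ∈ Poly k V)
    (hfx : ∃ x ∈ T, f x ≠ 0) (hgx : ∃ x ∈ T, g x ≠ 0) : ∃ x ∈ T, f x * g x ≠ 0 := by
  obtain ⟨x, hx, h1, h2⟩ := hT.2 f hf g hg hfx hgx
  exact ⟨x, hx, mul_ne_zero h1 h2⟩

theorem placed_apply {N : Submodule k M} (V : End k N) {π : M →ₗ[k] N} (hπ : ∀ x : N, π x = x)
    (j : ℕ) (x : N) : ((N.subtype ∘ₗ V ∘ₗ π : End k M) ^ j) x = (V ^ j) x := by
  induction j generalizing x with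
  | zero => simp
  | succ j ih =>
    rw [pow_succ, pow_succ, End.mul_apply, End.mul_apply, ← ih]
    simp [hπ]

theorem placed_map {N : Submodule k M} (V : End k N) {π : M →ₗ[k] N} (hπ : ∀ x : N, π x = x)
    (j : ℕ) : finrank k (N.map ((N.subtype ∘ₗ V ∘ₗ π : End k M) ^ j)) =
      finrank k (LinearMap.range (V ^ j)) := by
  have h3 : N.map ((N.subtype ∘ₗ V ∘ₗ π : End k M) ^ j) =
      (LinearMap.range (V ^ j)).map N.subtype := by
    ext y
    constructor
    · rintro ⟨x, hx, rfl⟩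
      exact ⟨_, ⟨⟨x, hx⟩, rfl⟩, (placed_apply V hπ j ⟨x, hx⟩).symm⟩
    · rintro ⟨_, ⟨x, rfl⟩, rfl⟩
      exact ⟨x, x.2, placed_apply V hπ j x⟩
  rw [h3, Submodule.finrank_map_subtype_eq]

theorem placed_pow {N : Submodule k M} (V : End k N) {π : M →ₗ[k] N} (hπ : ∀ x : N, π x = x)
    (j : ℕ) (x : M) : ((N.subtype ∘ₗ V ∘ₗ π : End k M) ^ (j + 1)) x = (V ^ (j + 1)) (π x) := by
  rw [pow_succ, pow_succ, End.mul_apply, End.mul_apply, ← placed_apply V hπ]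
  rfl

theorem stepA {m c : ℕ} {N F : Submodule k M} (hL : Irr k (LL (m + 1) N F)) {W : End k M}
    (hW : W ∈ LL (m + 1) N F) (hc : (m + 2) * c ≤ finrank k N)
    (hF : finrank k (F ⊓ N : Submodule k M) + c = finrank k N) {f : End k M → k}
    (hf : f ∈ Poly k (End k M)) (hfW : f W ≠ 0) :
    ∃ W' ∈ XX (m + 2) N, f W' ≠ 0 ∧ c ≤ finrank k (N.map (W' ^ (m + 1))) := by
  obtain ⟨V, V1, V2, V3⟩ := exists_nilp_adapted m c hc (F.comap N.subtype)
    (by rw [finrank_comap_subtype]; exact hF)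
  obtain ⟨π, hπ, hπF⟩ := exists_proj F N
  have hmem : (N.subtype ∘ₗ V ∘ₗ π : End k M) ∈ LL (m + 1) N F := by
    refine ⟨fun x => V1 _, fun x _ => (V _).2, fun x hx => ?_⟩
    rw [placed_pow V hπ, V2 _ (hπF x hx)]; rfl
  obtain ⟨g, hg, hg1, hg2⟩ := open_map N (m + 1) c (N.subtype ∘ₗ V ∘ₗ π : End k M)
    (by rw [placed_map V hπ, V3])
  obtain ⟨W', hW', h1, h2⟩ := hL.2 f hf g hg ⟨W, hW, hfW⟩ ⟨_, hmem, hg1⟩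
  exact ⟨W', LL_subset hW', h1, hg2 _ h2⟩

theorem stepB {m c : ℕ} {N : Submodule k M} (hX : Irr k (XX (m + 2) (⊤ : Submodule k N)))
    {W : End k M}
    (hW : W ∈ XX (m + 2) N) (hc : (m + 2) * c ≤ finrank k N)
    (hr : LinearMap.range W = LinearMap.ker (W ^ (m + 1))) {f : End k M → k}
    (hf : f ∈ Poly k (End k M)) (hfW : f W ≠ 0) :
    ∃ W' ∈ XX (m + 2) N, f W' ≠ 0 ∧ c ≤ finrank k (N.map (W' ^ (m + 1))) := by
  obtain ⟨hW1, hW2⟩ := hW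
  obtain ⟨ψ, hψ⟩ := exists_psi hW1 hr
  obtain ⟨π, hπ, -⟩ := exists_proj N N
  let ι := N.subtype
  let fV : End k N → (N →ₗ[k] M) := fun V =>
    ∑ i ∈ Finset.range (m + 2), (W ^ (m + 1 - i) * ψ : End k M) ∘ₗ ι ∘ₗ (V ^ i : End k N)
  have hfV : ∀ V : End k N, V ^ (m + 2) = 0 → W ∘ₗ fV V = fV V ∘ₗ V := by
    intro V hV
    have e1 : W ∘ₗ fV V = ∑ i ∈ Finset.range (m + 2),
        (W ^ (m + 2 - i) * ψ : End k M) ∘ₗ ι ∘ₗ (V ^ i : End k N) := by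
      ext x
      simp only [fV, LinearMap.comp_apply, LinearMap.sum_apply, map_sum]
      refine Finset.sum_congr rfl fun i hi => ?_
      have := Finset.mem_range.1 hi
      have : m + 2 - i = (m + 1 - i) + 1 := by omega
      rw [this, pow_succ']
      rfl
    have e2 : fV V ∘ₗ V = ∑ i ∈ Finset.range (m + 2),
        (W ^ (m + 1 - i) * ψ : End k M) ∘ₗ ι ∘ₗ (V ^ (i + 1) : End k N) := by
      ext x
      simp only [fV, LinearMap.comp_apply, LinearMap.sum_apply]
      refine Finset.sum_congr rfl fun i hi => ?_
      rw [pow_succ]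
      rfl
    rw [e1, e2, Finset.sum_range_succ', Finset.sum_range_succ _ (m + 1), Nat.sub_zero, hW1, hV]
    simp
  have hf0 : fV (W.restrict hW2) = ι := by
    ext x
    have : (∑ i ∈ Finset.range (m + 2), W ^ (m + 1 - i) * ψ * W ^ i) (x : M) = x := by
      rw [hψ]; rfl
    rw [LinearMap.sum_apply] at this
    simp only [fV, LinearMap.comp_apply, LinearMap.sum_apply]
    conv_rhs => rw [show ι x = (x : M) from rfl, ← this]
    refine Finset.sum_congr rfl fun i hi => ?_
    simp only [ι, End.mul_apply, Submodule.subtype_apply, restrict_pow_apply]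
  let h : End k N → End k M := fun V => fV V ∘ₗ π + (1 - ι ∘ₗ π)
  have hh : PolyMap k h := by
    refine PolyMap.add (PolyMap.lcomp ?_ (PolyMap.const π)) (PolyMap.const _)
    exact PolyMap.sum _ fun i _ => PolyMap.lcomp (PolyMap.const _)
      (PolyMap.lcomp (PolyMap.const ι) (PolyMap.epow PolyMap.id i))
  have hι : ∀ V (x : N), h V x = fV V x := by
    intro V x
    simp [h, hπ, ι]
  have h0 : h (W.restrict hW2) = 1 := by
    simp only [h, hf0]; simp
  obtain ⟨n, F, hF, hFe⟩ := Poly.clear hh (PolyMap.const W) hf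
  have hV0 : W.restrict hW2 ∈ XX (m + 2) (⊤ : Submodule k N) := by
    refine ⟨?_, fun x _ => trivial⟩
    ext x; rw [restrict_pow_apply, hW1]; rfl
  have hF0 : F (W.restrict hW2) ≠ 0 := by
    rw [hFe _ 1 (by rw [h0, one_mul]), h0]; simpa using hfW
  have hd0 : LinearMap.det (h (W.restrict hW2)) ≠ 0 := by
    rw [h0]; simp
  obtain ⟨V₁, hV1, hV1r⟩ := exists_nilp_le (k := k) (M := N) (m + 1) c hc
  obtain ⟨g, hg, hg1, hg2⟩ := open_range (m + 1) c V₁ hV1r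
  obtain ⟨V, hV, hne⟩ := hX.2 _ (Poly.mul hF hh.det) g hg
    ⟨_, hV0, mul_ne_zero hF0 hd0⟩ ⟨V₁, ⟨hV1, fun x _ => trivial⟩, hg1⟩
  obtain ⟨hne1, hne2⟩ := hne
  have hdet := right_ne_zero_of_mul hne1
  have hFV := left_ne_zero_of_mul hne1
  let e := LinearMap.equivOfDetNeZero (h V) hdet
  let q : End k M := e.symm
  have he : ∀ x, e x = h V x := fun x => rfl
  have hq1 : h V * q = 1 := by
    ext x
    show h V (e.symm x) = x
    rw [← he]; simp
  have hq2 : q * h V = 1 := by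
    ext x
    show e.symm (h V x) = x
    rw [← he]; simp
  rw [hFe V q hq1] at hFV
  have hW' : ∀ x : N, (q * W * h V) x = V x := by
    intro x
    simp only [End.mul_apply, hι]
    have := LinearMap.congr_fun (hfV V hV.1) x
    simp only [LinearMap.comp_apply] at this
    rw [this, ← hι, ← End.mul_apply, hq2]; rfl
  have hpow : ∀ j, (q * W * h V) ^ j = q * W ^ j * h V := by
    intro j
    induction j with
    | zero => simp [hq2]
    | succ j ih =>
      rw [pow_succ, ih, pow_succ]
      calc q * W ^ j * h V * (q * W * h V) = q * W ^ j * (h V * q) * W * h V := by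
            simp only [mul_assoc]
        _ = _ := by rw [hq1]; simp only [mul_assoc, mul_one, one_mul]
  have hWj : ∀ j (x : N), ((q * W * h V) ^ j) x = (V ^ j) x := by
    intro j
    induction j with
    | zero => intro x; simp
    | succ j ih => intro x; rw [pow_succ, pow_succ, End.mul_apply, hW', ih]; rfl
  refine ⟨q * W * h V, ⟨?_, ?_⟩, right_ne_zero_of_mul hFV, ?_⟩
  · rw [hpow, hW1]; simp
  · intro x hx
    rw [hW' ⟨x, hx⟩]; exact (V _).2
  · have h3 : N.map ((q * W * h V) ^ (m + 1)) = (LinearMap.range (V ^ (m + 1))).map N.subtype := by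
      ext y
      constructor
      · rintro ⟨x, hx, rfl⟩
        exact ⟨_, ⟨⟨x, hx⟩, rfl⟩, (hWj (m + 1) ⟨x, hx⟩).symm⟩
      · rintro ⟨_, ⟨x, rfl⟩, rfl⟩
        exact ⟨x, x.2, hWj (m + 1) x⟩
    rw [h3, Submodule.finrank_map_subtype_eq]
    exact hg2 V hne2

end Step
end GeomIrr

namespace GeomIrr
open Module
set_option linter.all false

section Claim
variable {k : Type*} [Field k]
variable {M : Type*} [AddCommGroup M] [Module k M] [FiniteDimensional k M]

theorem exists_max {V : Type*} {T : Set V} (hT : T.Nonempty) (v : V → ℕ) (D : ℕ)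
    (hD : ∀ x, v x ≤ D) : ∃ x ∈ T, ∀ y ∈ T, v y ≤ v x := by
  classical
  have hex : ∃ n, ∃ x ∈ T, D - v x = n := ⟨_, hT.some, hT.some_mem, rfl⟩
  obtain ⟨x, hx, hxn⟩ := Nat.find_spec hex
  refine ⟨x, hx, fun y hy => ?_⟩
  have := Nat.find_min' hex ⟨y, hy, rfl⟩
  have := hD y
  have := hD x
  omega

theorem claim1_step {m : ℕ} {N : Submodule k M}
    (hL : ∀ F, Irr k (LL (m + 1) N F))
    (hX : N = ⊤ ∨ Irr k (XX (m + 2) (⊤ : Submodule k N)))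
    {W₀ : End k M} (hW₀ : W₀ ∈ XX (m + 2) N) {α : ℕ}
    (hα : finrank k (N.map (W₀ ^ (m + 1))) = α)
    (hd : (m + 2) * (α + 1) ≤ finrank k N)
    {f : End k M → k} (hf : f ∈ Poly k (End k M)) (hfW : f W₀ ≠ 0) :
    ∃ W ∈ XX (m + 2) N, f W ≠ 0 ∧ α + 1 ≤ finrank k (N.map (W ^ (m + 1))) := by
  set F := LinearMap.ker (W₀ ^ (m + 1)) with hF
  set NF := N ⊓ F with hNF
  have hdimNF : α + finrank k NF = finrank k N := by
    rw [← hα]; exact finrank_map_add_inf_ker N (W₀ ^ (m + 1))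
  have hW₀L : W₀ ∈ LL (m + 1) N F := by
    refine ⟨fun x => ?_, hW₀.2, fun x hx => hx⟩
    rw [hF, LinearMap.mem_ker, ← End.mul_apply, ← pow_succ, hW₀.1]; rfl
  -- example for the rank on `NF`
  have hmul : (m + 2) * (α + 1) = (m + 1) * (α + 1) + (α + 1) := by ring
  obtain ⟨V, hV1, hV2⟩ := exists_nilp_le (k := k) (M := NF) m (α + 1) (by omega)
  obtain ⟨π, hπ, -⟩ := exists_proj N NF
  have hE : (NF.subtype ∘ₗ V ∘ₗ π : End k M) ∈ LL (m + 1) N F := by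
    refine ⟨fun x => (V (π x)).2.2, fun x _ => (V (π x)).2.1, fun x _ => ?_⟩
    rw [placed_pow V hπ, hV1]; rfl
  obtain ⟨g1, hg1, hg1e, hg1'⟩ := open_map NF m (α + 1) (NF.subtype ∘ₗ V ∘ₗ π : End k M)
    (by rw [placed_map V hπ]; exact hV2)
  obtain ⟨g2, hg2, hg2e, hg2'⟩ := open_range (m + 1) _ W₀ le_rfl
  obtain ⟨W₂, hW₂, hmax⟩ := exists_max (T := LL (m + 1) N F) ⟨W₀, hW₀L⟩
    (fun W => finrank k (LinearMap.range W ⊔ NF : Submodule k M)) (finrank k M)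
    (fun W => Submodule.finrank_le _)
  obtain ⟨g3, hg3, hg3e, hg3'⟩ := open_sup NF 1 _ W₂ le_rfl
  obtain ⟨W, hWL, hne1, hne2⟩ := (hL F).2 _ (Poly.mul hf hg1) _ (Poly.mul hg2 hg3)
    ((hL F).mul hf hg1 ⟨W₀, hW₀L, hfW⟩ ⟨_, hE, hg1e⟩)
    ((hL F).mul hg2 hg3 ⟨W₀, hW₀L, hg2e⟩ ⟨_, hW₂, hg3e⟩)
  have hfW' := left_ne_zero_of_mul hne1
  have hr1 := hg1' W (right_ne_zero_of_mul hne1)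
  have hr2 := hg2' W (left_ne_zero_of_mul hne2)
  have hr3 := hg3' W (right_ne_zero_of_mul hne2)
  rw [pow_one, pow_one] at hr3
  have hker : LinearMap.ker (W ^ (m + 1)) = F := by
    symm
    apply Submodule.eq_of_le_of_finrank_le
    · intro x hx; exact hWL.2.2 x hx
    · have e1 := LinearMap.finrank_range_add_finrank_ker (W ^ (m + 1))
      have e2 := LinearMap.finrank_range_add_finrank_ker (W₀ ^ (m + 1))
      rw [← hF] at e2
      omega
  have hrF : LinearMap.range W ≤ F := by
    rintro _ ⟨x, rfl⟩; exact hWL.1 x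
  have hαW : finrank k (N.map (W ^ (m + 1))) = α := by
    have := finrank_map_add_inf_ker N (W ^ (m + 1))
    rw [hker, ← hNF] at this
    omega
  by_cases hcase : NF ≤ LinearMap.range W
  · have hrange : LinearMap.range W = F := by
      apply le_antisymm hrF
      by_contra hnot
      obtain ⟨f0, hf0F, hf0⟩ := Set.not_subset.1 hnot
      have : ¬ NF.map (W ^ m) ≤ N.map (W ^ (m + 1)) := fun hle => by
        have := Submodule.finrank_mono hle
        omega
      obtain ⟨_, ⟨n, hn, rfl⟩, hnn⟩ := Set.not_subset.1 this
      obtain ⟨g, hg⟩ := hcase hn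
      have hgN : g ∉ N ⊔ F := by
        intro hmem
        obtain ⟨n', hn', f', hf', rfl⟩ := Submodule.mem_sup.1 hmem
        apply hnn
        refine ⟨n', hn', ?_⟩
        rw [← hg, ← End.mul_apply, ← pow_succ, map_add, hWL.2.2 f' hf', add_zero]
      obtain ⟨γ, hγ1, hγ2⟩ := Submodule.exists_le_ker_of_notMem hgN
      have hγN : ∀ x ∈ N, γ x = 0 := fun x hx => hγ2 (Submodule.mem_sup_left hx)
      have hγF : ∀ x ∈ F, γ x = 0 := fun x hx => hγ2 (Submodule.mem_sup_right hx)
      let W' : End k M := W + γ.smulRight f0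
      have hW' : ∀ x, W' x = W x + γ x • f0 := fun x => rfl
      have hW'F : ∀ j, ∀ x ∈ F, (W' ^ j) x = (W ^ j) x := by
        intro j
        induction j with
        | zero => intro x _; simp
        | succ j ih =>
          intro x hx
          rw [pow_succ, pow_succ, End.mul_apply, End.mul_apply, hW', hγF x hx, zero_smul, add_zero,
            ih _ (hWL.1 x)]
      have hW'L : W' ∈ LL (m + 1) N F := by
        refine ⟨fun x => F.add_mem (hWL.1 x) (F.smul_mem _ hf0F), fun x hx => ?_, fun x hx => ?_⟩
        · rw [hW', hγN x hx, zero_smul, add_zero]; exact hWL.2.1 x hx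
        · rw [hW'F _ x hx]; exact hWL.2.2 x hx
      have hlt : LinearMap.range W ⊔ NF < LinearMap.range W' ⊔ NF := by
        have hf0' : f0 ∈ LinearMap.range W' ⊔ NF := by
          have e1 : W' ((γ g)⁻¹ • g) ∈ LinearMap.range W' ⊔ NF :=
            Submodule.mem_sup_left ⟨_, rfl⟩
          have e2 : (γ g)⁻¹ • n ∈ LinearMap.range W' ⊔ NF :=
            Submodule.mem_sup_right (NF.smul_mem _ hn)
          have e3 : f0 = W' ((γ g)⁻¹ • g) - (γ g)⁻¹ • n := by
            rw [map_smul, hW', hg, smul_add, smul_smul, inv_mul_cancel₀ hγ1]; simp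
          rw [e3]
          exact Submodule.sub_mem _ e1 e2
        rw [SetLike.lt_iff_le_and_exists]
        refine ⟨sup_le ?_ le_sup_right, f0, hf0', ?_⟩
        · rintro _ ⟨x, rfl⟩
          have : W x = W' x - γ x • f0 := by rw [hW']; simp
          rw [this]
          exact Submodule.sub_mem _ (Submodule.mem_sup_left ⟨_, rfl⟩) (Submodule.smul_mem _ _ hf0')
        · rw [sup_eq_left.2 hcase]; exact hf0
      have := Submodule.finrank_lt_finrank_of_lt hlt
      have := hmax W' hW'L
      omega
    rcases hX with hX | hX
    · exfalso
      have hWXX := (LL_subset hWL).1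
      have e1 := finrank_le_of_pow_eq_zero hWXX
      have e2 := LinearMap.finrank_range_add_finrank_ker W
      have e3 := LinearMap.finrank_range_add_finrank_ker (W ^ (m + 1))
      rw [hker] at e3
      rw [hrange] at e2
      rw [hX, ← LinearMap.range_eq_map] at hαW
      rw [hX, finrank_top] at hd
      have e4 : finrank k (LinearMap.ker W) = α := by omega
      rw [e4] at e1
      have : (m + 2) * (α + 1) = (m + 1 + 1) * α + (m + 2) := by ring
      omega
    · exact stepB hX (LL_subset hWL) hd (by rw [hrange, hker]) hf hfW'
  · obtain ⟨n, hn, hnr⟩ := Set.not_subset.1 hcase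
    obtain ⟨φ, hφ1, hφ2⟩ := Submodule.exists_le_ker_of_notMem hnr
    have hWF' : W ∈ LL (m + 1) N (F ⊓ LinearMap.ker φ) :=
      ⟨fun x => ⟨hWL.1 x, hφ2 ⟨x, rfl⟩⟩, hWL.2.1, fun x hx => hWL.2.2 x hx.1⟩
    refine stepA (hL _) hWF' hd ?_ hf hfW'
    have e1 := hyperplane hn hφ1
    have e2 : F ⊓ LinearMap.ker φ ⊓ N = NF ⊓ LinearMap.ker φ := by
      rw [hNF]; ac_rfl
    rw [e2]
    omega

theorem claim1 {m : ℕ} {N : Submodule k M}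
    (hL : ∀ F, Irr k (LL (m + 1) N F))
    (hX : N = ⊤ ∨ Irr k (XX (m + 2) (⊤ : Submodule k N)))
    {W₀ : End k M} (hW₀ : W₀ ∈ XX (m + 2) N)
    {f : End k M → k} (hf : f ∈ Poly k (End k M)) (hfW : f W₀ ≠ 0) :
    ∃ W ∈ XX (m + 2) N, f W ≠ 0 ∧ finrank k N / (m + 2) ≤ finrank k (N.map (W ^ (m + 1))) := by
  have key : ∀ r ≤ finrank k N / (m + 2),
      ∃ W ∈ XX (m + 2) N, f W ≠ 0 ∧ r ≤ finrank k (N.map (W ^ (m + 1))) := by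
    intro r
    induction r with
    | zero => intro _; exact ⟨W₀, hW₀, hfW, Nat.zero_le _⟩
    | succ r ih =>
      intro hr
      obtain ⟨W, hW, h1, h2⟩ := ih (by omega)
      rcases h2.lt_or_eq with h3 | h3
      · exact ⟨W, hW, h1, h3⟩
      · exact claim1_step hL hX hW h3.symm
          ((Nat.mul_le_mul_left _ hr).trans (Nat.mul_div_le _ _)) hf h1
  exact key _ le_rfl

/-- Inverse of transposition. -/
noncomputable def untr (k : Type*) [Field k] (M : Type*) [AddCommGroup M] [Module k M]
    [FiniteDimensional k M] : End k (Dual k M) →ₗ[k] End k M :=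
  (LinearMap.lcomp k M (Dual.eval k M)) ∘ₗ
    (LinearMap.llcomp k (Dual k (Dual k M)) (Dual k (Dual k M)) M
      ((evalEquiv k M).symm : Dual k (Dual k M) →ₗ[k] M)) ∘ₗ Dual.transpose

theorem untr_apply (T : End k (Dual k M)) (φ : Dual k M) (x : M) :
    φ (untr k M T x) = T φ x := by
  have : evalEquiv k M (untr k M T x) = T.dualMap (Dual.eval k M x) := by
    simp [untr, Dual.transpose]
    rfl
  have := LinearMap.congr_fun this φ
  simpa using this

theorem untr_dualMap (W : End k M) : untr k M W.dualMap = W := by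
  ext x
  apply Module.eval_apply_injective k
  ext φ
  simp [untr_apply]

theorem dualMap_untr (T : End k (Dual k M)) : (untr k M T).dualMap = T := by
  ext φ x
  simp [untr_apply]

theorem dualMap_pow' (W : End k M) (j : ℕ) : (W ^ j : End k M).dualMap = W.dualMap ^ j := by
  induction j with
  | zero => ext; simp
  | succ j ih => rw [pow_succ', pow_succ, ← ih]; rfl

theorem mem_XX_dual {m : ℕ} {N : Submodule k M} {W : End k M} (h : W ∈ XX m N) :
    W.dualMap ∈ XX m N.dualAnnihilator := by
  refine ⟨?_, fun φ hφ => ?_⟩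
  · rw [← dualMap_pow', h.1]; ext; simp
  · rw [Submodule.mem_dualAnnihilator] at hφ ⊢
    intro x hx
    exact hφ _ (h.2 x hx)

theorem mem_XX_undual {m : ℕ} {N : Submodule k M} {W : End k M}
    (h : W.dualMap ∈ XX m N.dualAnnihilator) : W ∈ XX m N := by
  refine ⟨?_, fun x hx => ?_⟩
  · have := h.1
    rw [← dualMap_pow'] at this
    rw [← untr_dualMap (W ^ m), this, map_zero]
  · rw [← Subspace.dualAnnihilator_dualCoannihilator_eq (W := N),
      Submodule.mem_dualCoannihilator]
    intro φ hφ
    have := h.2 φ hφ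
    rw [Submodule.mem_dualAnnihilator] at this
    exact this x hx

/-- The induction hypothesis used for the density claims. -/
def Hyp (k : Type*) [Field k] {M : Type*} [AddCommGroup M] [Module k M] (m : ℕ)
    (N : Submodule k M) : Prop :=
  (∀ F, Irr k (LL (m + 1) N F)) ∧ (N = ⊤ ∨ Irr k (XX (m + 2) (⊤ : Submodule k N)))

theorem claim2 {m : ℕ} {N : Submodule k M} (hH : Hyp k m N.dualAnnihilator)
    {W₀ : End k M} (hW₀ : W₀ ∈ XX (m + 2) N)
    {f : End k M → k} (hf : f ∈ Poly k (End k M)) (hfW : f W₀ ≠ 0) :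
    ∃ W ∈ XX (m + 2) N, f W ≠ 0 ∧ finrank k N + (finrank k M - finrank k N) / (m + 2) ≤
      finrank k (LinearMap.range (W ^ (m + 1)) ⊔ N : Submodule k M) := by
  obtain ⟨T, hT, hfT, hrT⟩ := claim1 hH.1 hH.2 (mem_XX_dual hW₀)
    ((PolyMap.linear (untr k M)).comp_poly hf) (by rw [untr_dualMap]; exact hfW)
  have e1 := Subspace.finrank_add_finrank_dualAnnihilator_eq N
  refine ⟨untr k M T, mem_XX_undual (by rw [dualMap_untr]; exact hT), hfT, ?_⟩
  set W := untr k M T with hW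
  have hWT : T = W.dualMap := by rw [hW, dualMap_untr]
  rw [hWT, ← dualMap_pow'] at hrT
  have e2 := finrank_map_add_inf_ker N.dualAnnihilator (W ^ (m + 1) : End k M).dualMap
  rw [LinearMap.ker_dualMap_eq_dualAnnihilator_range, ← Submodule.dualAnnihilator_sup_eq,
    sup_comm] at e2
  have e3 := Subspace.finrank_add_finrank_dualAnnihilator_eq
    (LinearMap.range (W ^ (m + 1)) ⊔ N)
  have e4 : finrank k N.dualAnnihilator = finrank k M - finrank k N := by omega
  rw [e4] at hrT
  omega

end Claim
end GeomIrr

namespace GeomIrr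
open Module
set_option linter.all false

section Final
variable {k : Type*} [Field k]
variable {M : Type*} [AddCommGroup M] [Module k M] [FiniteDimensional k M]

/-- Union of strata with prescribed dimensions. -/
def SS (m : ℕ) (N : Submodule k M) (a b : ℕ) : Set (End k M) :=
  {W | ∃ F : Submodule k M, finrank k (N ⊓ F : Submodule k M) = a ∧ finrank k F = b ∧ W ∈ LL m N F}

theorem conj_mem_LL {m : ℕ} {N F F' : Submodule k M} {W h g : End k M}
    (hW : W ∈ LL m N F) (hgh : g * h = 1) (hhg : h * g = 1) (hhN : ∀ x ∈ N, h x ∈ N)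
    (hgN : ∀ x ∈ N, g x ∈ N) (hgF : ∀ x ∈ F, g x ∈ F') (hhF : ∀ x ∈ F', h x ∈ F) :
    g * W * h ∈ LL m N F' := by
  have hpow : ∀ j, (g * W * h) ^ j = g * W ^ j * h := by
    intro j
    induction j with
    | zero => simp [hgh]
    | succ j ih =>
      rw [pow_succ, ih, pow_succ]
      calc g * W ^ j * h * (g * W * h) = g * W ^ j * (h * g) * W * h := by
            simp only [mul_assoc]
        _ = _ := by rw [hhg]; simp only [mul_assoc, mul_one, one_mul]
  refine ⟨fun x => hgF _ (hW.1 _), fun x hx => hgN _ (hW.2.1 _ (hhN x hx)), fun x hx => ?_⟩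
  rw [hpow]
  simp only [End.mul_apply]
  rw [hW.2.2 _ (hhF x hx), map_zero]

theorem mem_of_map_le {N N' : Submodule k M} (f : M ≃ₗ[k] M) (hf : ∀ x ∈ N, f x ∈ N')
    (hd : finrank k N = finrank k N') : ∀ x ∈ N', f.symm x ∈ N := by
  have h1 : N.map (f : M →ₗ[k] M) ≤ N' := by
    rintro _ ⟨x, hx, rfl⟩; exact hf x hx
  have h2 : N.map (f : M →ₗ[k] M) = N' := by
    apply Submodule.eq_of_le_of_finrank_le h1
    rw [← hd]
    exact (LinearEquiv.finrank_map_eq f N).ge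
  intro x hx
  rw [← h2] at hx
  obtain ⟨y, hy, rfl⟩ := hx
  simpa using hy

theorem irr_SS [Infinite k] {m : ℕ} {N : Submodule k M} {a b : ℕ}
    (hL : ∀ F, Irr k (LL m N F)) (hne : (SS m N a b).Nonempty) : Irr k (SS m N a b) := by
  obtain ⟨W₀, F₀, ha₀, hb₀, -⟩ := id hne
  refine ⟨hne, ?_⟩
  let P : Submodule k (End k M) :=
    { carrier := {z | ∀ x ∈ N, z x ∈ N}
      add_mem' := by
        rintro a b h1 h2
        exact fun x hx => N.add_mem (h1 x hx) (h2 x hx)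
      zero_mem' := fun x _ => N.zero_mem
      smul_mem' := by
        rintro c a h1
        exact fun x hx => N.smul_mem _ (h1 x hx) }
  have hT := (Irr.submodule P).prod (hL F₀)
  have hh : PolyMap k (fun p : End k M × End k M => p.1) :=
    PolyMap.linear (LinearMap.fst k (End k M) (End k M))
  have hw : PolyMap k (fun p : End k M × End k M => p.2) :=
    PolyMap.linear (LinearMap.snd k (End k M) (End k M))
  -- every nonvanishing pulls back
  have key : ∀ f ∈ Poly k (End k M), (∃ W ∈ SS m N a b, f W ≠ 0) →
      ∃ F ∈ Poly k (End k M × End k M), (∃ p ∈ (P : Set (End k M)) ×ˢ (LL m N F₀), F p ≠ 0) ∧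
        ∀ p, ∀ g, p.1 * g = 1 → F p ≠ 0 → f (g * p.2 * p.1) ≠ 0 := by
    rintro f hf ⟨W, ⟨F, ha, hb, hW⟩, hfW⟩
    obtain ⟨n, Φ, hΦ, hΦe⟩ := Poly.clear hh hw hf
    obtain ⟨e, heN, heF⟩ := exists_equiv_pair N F F₀ (hb.trans hb₀.symm) (ha.trans ha₀.symm)
    let h : End k M := e
    let g : End k M := e.symm
    have hgh : g * h = 1 := by ext x; simp [g, h]
    have hhg : h * g = 1 := by ext x; simp [g, h]
    refine ⟨Φ, hΦ, ⟨(h, h * W * g), ⟨heN, ?_⟩, ?_⟩, ?_⟩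
    · exact conj_mem_LL hW hhg hgh (mem_of_map_le e heN rfl) heN heF
        (mem_of_map_le e heF (hb.trans hb₀.symm))
    · rw [hΦe _ g hhg]
      refine mul_ne_zero (pow_ne_zero _ ?_) ?_
      · intro h0
        have := congrArg LinearMap.det hhg
        rw [map_mul] at this
        simp [h0] at this
      · have : g * (h * W * g) * h = W := by
          calc g * (h * W * g) * h = (g * h) * W * (g * h) := by simp only [mul_assoc]
            _ = W := by rw [hgh]; simp
        show f (g * (h * W * g) * h) ≠ 0
        rw [this]; exact hfW
    · intro p g hg hp
      rw [hΦe p g hg] at hp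
      exact right_ne_zero_of_mul hp
  intro f₁ hf₁ f₂ hf₂ hx₁ hx₂
  obtain ⟨Φ₁, hΦ₁, hn₁, h₁⟩ := key f₁ hf₁ hx₁
  obtain ⟨Φ₂, hΦ₂, hn₂, h₂⟩ := key f₂ hf₂ hx₂
  have hdet : (fun p : End k M × End k M => LinearMap.det p.1) ∈ Poly k (End k M × End k M) :=
    hh.det
  obtain ⟨w₀, hw₀⟩ := (hL F₀).1
  have hdet0 : ∃ p ∈ (P : Set (End k M)) ×ˢ (LL m N F₀), LinearMap.det p.1 ≠ 0 :=
    ⟨(1, w₀), ⟨fun x hx => hx, hw₀⟩, by simp⟩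
  obtain ⟨⟨h, w⟩, ⟨hP, hw'⟩, e1, e2⟩ := hT.2 _ hdet _ (Poly.mul hΦ₁ hΦ₂) hdet0
    (hT.mul hΦ₁ hΦ₂ hn₁ hn₂)
  simp only at e1
  let e := LinearMap.equivOfDetNeZero h e1
  let g : End k M := e.symm
  have he : ∀ x, e x = h x := fun x => rfl
  have hhg : h * g = 1 := by
    ext x
    show h (e.symm x) = x
    rw [← he]; simp
  have hgh : g * h = 1 := by
    ext x
    show e.symm (h x) = x
    rw [← he]; simp
  have hgN : ∀ x ∈ N, g x ∈ N := mem_of_map_le e hP rfl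
  refine ⟨g * w * h, ⟨F₀.map g, ?_, ?_, ?_⟩, h₁ (h, w) g hhg (left_ne_zero_of_mul e2),
    h₂ (h, w) g hhg (right_ne_zero_of_mul e2)⟩
  · have : N ⊓ F₀.map g = (N ⊓ F₀).map g := by
      ext x
      constructor
      · rintro ⟨hx, y, hy, rfl⟩
        refine ⟨y, ⟨?_, hy⟩, rfl⟩
        have := hP _ hx
        rw [← End.mul_apply, hhg] at this
        exact this
      · rintro ⟨y, ⟨hy1, hy2⟩, rfl⟩
        exact ⟨hgN y hy1, y, hy2, rfl⟩
    rw [this, ← ha₀]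
    exact LinearEquiv.finrank_map_eq e.symm _
  · rw [← hb₀]
    exact LinearEquiv.finrank_map_eq e.symm _
  · refine conj_mem_LL hw' hgh hhg hP hgN (fun x hx => ⟨x, hx, rfl⟩) ?_
    rintro _ ⟨y, hy, rfl⟩
    rw [← End.mul_apply, hhg]
    exact hy

theorem mem_SS {m : ℕ} {N : Submodule k M} {W : End k M} (hW : W ∈ XX (m + 2) N)
    (h1 : finrank k N / (m + 2) ≤ finrank k (N.map (W ^ (m + 1))))
    (h2 : finrank k N + (finrank k M - finrank k N) / (m + 2) ≤
      finrank k (LinearMap.range (W ^ (m + 1)) ⊔ N : Submodule k M)) :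
    W ∈ SS (m + 1) N (finrank k N - finrank k N / (m + 2))
      (finrank k M - finrank k N / (m + 2) - (finrank k M - finrank k N + (m + 1)) / (m + 2)) := by
  obtain ⟨hW1, hW2⟩ := hW
  set F := LinearMap.ker (W ^ (m + 1)) with hF
  have hrF : ∀ x, W x ∈ F := by
    intro x
    rw [hF, LinearMap.mem_ker, ← End.mul_apply, ← pow_succ, hW1]; rfl
  have hWF : W ∈ LL (m + 1) N F := ⟨hrF, hW2, fun x hx => hx⟩
  obtain ⟨e, he⟩ : ∃ e, finrank k M = finrank k N + e :=
    ⟨_, (Nat.add_sub_of_le (Submodule.finrank_le N)).symm⟩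
  have a1 := mul_finrank_map_le hW1 hW2
  have a2 := mul_finrank_range_le hW1
  have a3 := finrank_map_add_inf_ker N (W ^ (m + 1))
  have a4 := LinearMap.finrank_range_add_finrank_ker (W ^ (m + 1))
  have a5 := Submodule.finrank_sup_add_finrank_inf_eq (LinearMap.range (W ^ (m + 1))) N
  have a6 : finrank k (N.map (W ^ (m + 1))) ≤
      finrank k (LinearMap.range (W ^ (m + 1)) ⊓ N : Submodule k M) := by
    apply Submodule.finrank_mono
    rintro _ ⟨x, hx, rfl⟩
    refine ⟨⟨x, rfl⟩, ?_⟩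
    have : ∀ j, ∀ x ∈ N, (W ^ j) x ∈ N := by
      intro j
      induction j with
      | zero => intro x hx; simpa using hx
      | succ j ih => intro x hx; rw [pow_succ, End.mul_apply]; exact ih _ (hW2 x hx)
    exact this _ x hx
  rw [← hF] at a3 a4
  set d := finrank k N with hd
  set α := finrank k (N.map (W ^ (m + 1))) with hα
  set ρ := finrank k (LinearMap.range (W ^ (m + 1))) with hρ
  have b1 : α ≤ d / (m + 2) := by
    rw [Nat.le_div_iff_mul_le (by omega), mul_comm]; exact a1
  have b2 : ρ ≤ (d + e) / (m + 2) := by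
    rw [Nat.le_div_iff_mul_le (by omega), mul_comm, ← he]; exact a2
  have he' : finrank k M - d = e := by omega
  rw [he'] at h2 ⊢
  have hα' : α = d / (m + 2) := by omega
  have b3 : d / (m + 2) + e / (m + 2) ≤ ρ := by omega
  have c1 := Nat.div_add_mod d (m + 2)
  have c2 := Nat.div_add_mod e (m + 2)
  have c3 := Nat.mod_lt d (show m + 2 > 0 by omega)
  have c4 := Nat.mod_lt e (show m + 2 > 0 by omega)
  have hsum : (d + e) / (m + 2) = d / (m + 2) + e / (m + 2) +
      (d % (m + 2) + e % (m + 2)) / (m + 2) := by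
    conv_lhs => rw [← c1, ← c2]
    have : (m + 2) * (d / (m + 2)) + d % (m + 2) + ((m + 2) * (e / (m + 2)) + e % (m + 2)) =
      (d % (m + 2) + e % (m + 2)) + (m + 2) * (d / (m + 2) + e / (m + 2)) := by ring
    rw [this, Nat.add_mul_div_left _ _ (by omega)]
    omega
  have hceil : (e + (m + 1)) / (m + 2) = e / (m + 2) + (e % (m + 2) + (m + 1)) / (m + 2) := by
    conv_lhs => rw [← c2]
    have : (m + 2) * (e / (m + 2)) + e % (m + 2) + (m + 1) =
      (e % (m + 2) + (m + 1)) + (m + 2) * (e / (m + 2)) := by ring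
    rw [this, Nat.add_mul_div_left _ _ (by omega)]
    omega
  have hsplit : ρ = d / (m + 2) + (e + (m + 1)) / (m + 2) ∨
      (0 < e % (m + 2) ∧ ρ = d / (m + 2) + e / (m + 2) ∧
        (e + (m + 1)) / (m + 2) = e / (m + 2) + 1) := by
    rcases Nat.eq_zero_or_pos (e % (m + 2)) with h0 | h0
    · left
      rw [h0] at hsum hceil
      rw [Nat.div_eq_of_lt (show d % (m + 2) + 0 < m + 2 by omega)] at hsum
      rw [Nat.div_eq_of_lt (show 0 + (m + 1) < m + 2 by omega)] at hceil
      omega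
    · have e1 : (d % (m + 2) + e % (m + 2)) / (m + 2) < 2 :=
        Nat.div_lt_of_lt_mul (by omega)
      have e2 : (e % (m + 2) + (m + 1)) / (m + 2) = 1 := by
        rw [Nat.div_eq_iff (by omega)]; omega
      rw [e2] at hceil
      by_cases hρ' : ρ = d / (m + 2) + e / (m + 2)
      · exact Or.inr ⟨h0, hρ', hceil⟩
      · left; omega
  rcases hsplit with hs | ⟨h0, hs, hs'⟩
  · exact ⟨F, by omega, by omega, hWF⟩
  · have hnot : ¬ F ≤ LinearMap.range W ⊔ (N ⊓ F) := by
      intro hle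
      have hsup : LinearMap.range W ⊔ N = F ⊔ N := by
        apply le_antisymm
        · refine sup_le_sup_right ?_ _
          rintro _ ⟨x, rfl⟩; exact hrF x
        · refine sup_le (hle.trans (sup_le_sup_left inf_le_left _)) le_sup_right
      have q1 := quot_bound hW1 hW2
      have q2 := Submodule.finrank_sup_add_finrank_inf_eq F N
      rw [inf_comm] at q2
      rw [hsup, ← hd] at q1
      rw [← hd] at q2
      have q3 : finrank k (F ⊔ N : Submodule k M) + e / (m + 2) = finrank k M := by omega
      have q4 : (m + 2) * finrank k (F ⊔ N : Submodule k M) + (m + 2) * (e / (m + 2)) =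
          (m + 2) * finrank k M := by rw [← mul_add, q3]
      have q5 : (m + 1 + 1) = m + 2 := rfl
      omega
    obtain ⟨f0, hf0F, hf0⟩ := Set.not_subset.1 hnot
    obtain ⟨φ, hφ1, hφ2⟩ := Submodule.exists_le_ker_of_notMem hf0
    refine ⟨F ⊓ LinearMap.ker φ, ?_, ?_, ?_⟩
    · have : N ⊓ (F ⊓ LinearMap.ker φ) = N ⊓ F := by
        rw [← inf_assoc]
        exact inf_eq_left.2 (le_sup_right.trans hφ2)
      rw [this]; omega
    · have := hyperplane (N := F) hf0F hφ1
      omega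
    · exact ⟨fun x => ⟨hrF x, hφ2 (Submodule.mem_sup_left ⟨x, rfl⟩)⟩, hW2, fun x hx => hx.1⟩

theorem SS_subset {m : ℕ} {N : Submodule k M} {a b : ℕ} : SS m N a b ⊆ XX (m + 1) N := by
  rintro W ⟨F, -, -, hW⟩
  exact LL_subset hW

theorem irr_of_hyp [Infinite k] {m : ℕ} {N : Submodule k M} (hX : Hyp k m N)
    (hX' : Hyp k m N.dualAnnihilator) : Irr k (XX (m + 2) N) := by
  have hzero : (0 : End k M) ∈ XX (m + 2) N := ⟨by simp, fun x _ => N.zero_mem⟩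
  have key : ∀ f ∈ Poly k (End k M), (∃ W ∈ XX (m + 2) N, f W ≠ 0) →
      ∃ W ∈ SS (m + 1) N (finrank k N - finrank k N / (m + 2))
      (finrank k M - finrank k N / (m + 2) - (finrank k M - finrank k N + (m + 1)) / (m + 2)),
        f W ≠ 0 := by
    rintro f hf ⟨W, hW, hfW⟩
    obtain ⟨W₁, hW₁, hf₁, hr₁⟩ := claim1 hX.1 hX.2 hW hf hfW
    obtain ⟨g, hg, hg1, hg2⟩ := open_map N (m + 1) _ W₁ hr₁
    obtain ⟨W₂, hW₂, hf₂, hr₂⟩ := claim2 hX' hW₁ (Poly.mul hf hg) (mul_ne_zero hf₁ hg1)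
    exact ⟨W₂, mem_SS hW₂ (hg2 _ (right_ne_zero_of_mul hf₂)) hr₂, left_ne_zero_of_mul hf₂⟩
  refine ⟨⟨0, hzero⟩, fun f hf g hg hfx hgx => ?_⟩
  have h1 := key f hf hfx
  have h2 := key g hg hgx
  obtain ⟨W, hW, -⟩ := h1
  obtain ⟨x, hx, hx'⟩ := (irr_SS hX.1 ⟨W, hW⟩).2 f hf g hg (key f hf hfx) h2
  exact ⟨x, SS_subset hx, hx'⟩

theorem Irr.of_subsingleton {V : Type*} [AddCommGroup V] [Module k V] {T : Set V}
    (h : T.Nonempty) (h' : T.Subsingleton) : Irr k T := by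
  refine ⟨h, ?_⟩
  rintro f - g - ⟨x, hx, hfx⟩ ⟨y, hy, hgy⟩
  obtain rfl := h' hx hy
  exact ⟨x, hx, hfx, hgy⟩

end Final

theorem irr_XX {k : Type u} [Field k] [Infinite k] (m : ℕ) : ∀ (M : Type u) [AddCommGroup M]
    [Module k M] [FiniteDimensional k M] (N : Submodule k M), Irr k (XX (m + 1) N) := by
  induction m with
  | zero =>
    intro M _ _ _ N
    apply Irr.of_subsingleton
    · exact ⟨0, by simp, fun x _ => N.zero_mem⟩
    · rintro a ⟨ha, -⟩ b ⟨hb, -⟩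
      simp at ha hb
      rw [ha, hb]
  | succ m ih =>
    have hLL : ∀ (M : Type u) [AddCommGroup M] [Module k M] [FiniteDimensional k M]
        (N F : Submodule k M), Irr k (LL (m + 1) N F) := by
      intro M _ _ _ N F
      exact Irr.LL (ih F _)
    have hbot : ∀ (M : Type u) [AddCommGroup M] [Module k M] [FiniteDimensional k M]
        (N : Submodule k M), N = ⊥ → Hyp k m N := by
      rintro M _ _ _ N rfl
      refine ⟨fun F => hLL _ _ _, Or.inr ?_⟩
      apply Irr.of_subsingleton
      · exact ⟨0, by simp, fun x _ => trivial⟩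
      · intro a _ b _
        ext x
    have htop : ∀ (M : Type u) [AddCommGroup M] [Module k M] [FiniteDimensional k M],
        Irr k (XX (m + 2) (⊤ : Submodule k M)) := by
      intro M _ _ _
      exact irr_of_hyp ⟨fun F => hLL _ _ _, Or.inl rfl⟩
        (hbot (Dual k M) _ Submodule.dualAnnihilator_top)
    have hall : ∀ (M : Type u) [AddCommGroup M] [Module k M] [FiniteDimensional k M]
        (N : Submodule k M), Hyp k m N := by
      intro M _ _ _ N
      exact ⟨fun F => hLL _ _ _, Or.inr (htop N)⟩
    intro M _ _ _ N
    exact irr_of_hyp (hall M N) (hall (Dual k M) _)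

end GeomIrr

namespace GeomIrr
open Module
set_option linter.all false

/-- The bottom block projections of a block upper triangular endomorphism. -/
theorem block_pow {k : Type u} [Field k] {P Q : Type u} [AddCommGroup P] [Module k P]
    [AddCommGroup Q] [Module k Q] (W : End k (P × Q)) (A : End k P) (B : End k Q)
    (C : Q →ₗ[k] P) (h : ∀ x y, W (x, y) = (A x + C y, B y)) (j : ℕ) :
    ∀ x y, (W ^ j) (x, y) =
      ((A ^ j) x + ∑ i ∈ Finset.range j, (A ^ (j - 1 - i)) (C ((B ^ i) y)), (B ^ j) y) := by
  induction j with
  | zero => intro x y; simp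
  | succ j ih =>
    intro x y
    rw [pow_succ', Module.End.mul_apply, ih, h, Finset.sum_range_succ, map_add, map_sum,
      pow_succ', Module.End.mul_apply, pow_succ', Module.End.mul_apply]
    refine Prod.ext ?_ rfl
    simp only [add_tsub_cancel_right, Nat.sub_self, pow_zero, Module.End.one_apply]
    rw [← add_assoc]
    congr 2
    refine Finset.sum_congr rfl fun i hi => ?_
    have hi' := Finset.mem_range.1 hi
    have : j - i = (j - 1 - i) + 1 := by omega
    rw [this, pow_succ', Module.End.mul_apply]

/-- The product space underlying `ASpace`, with its linear structure visible. -/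
abbrev BSpace (k : Type u) [Field k] (n d e : ℕ) : Type u :=
  Matrix (Fin d) (Fin d) k × Matrix (Fin e) (Fin e) k × (Fin n → Matrix (Fin d) (Fin e) k)

theorem poly_coord {k : Type u} [Field k] {n d e : ℕ} (i : AIdx n d e) :
    (fun x : BSpace k n d e => aCoords (k := k) (n := n) (d := d) (e := e) x i)
      ∈ Poly k (BSpace k n d e) := by
  rcases i with i | i | i
  · exact Poly.dual (V := BSpace k n d e)
      { toFun := fun x => x.1 i.1 i.2, map_add' := fun _ _ => rfl, map_smul' := fun _ _ => rfl }
  · exact Poly.dual (V := BSpace k n d e)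
      { toFun := fun x => x.2.1 i.1 i.2, map_add' := fun _ _ => rfl, map_smul' := fun _ _ => rfl }
  · exact Poly.dual (V := BSpace k n d e)
      { toFun := fun x => x.2.2 i.1 i.2.1 i.2.2, map_add' := fun _ _ => rfl,
        map_smul' := fun _ _ => rfl }

theorem poly_eval {k : Type u} [Field k] {n d e : ℕ} (p : MvPolynomial (AIdx n d e) k) :
    (fun x : BSpace k n d e =>
      MvPolynomial.eval (aCoords (k := k) (n := n) (d := d) (e := e) x) p)
      ∈ Poly k (BSpace k n d e) := by
  induction p using MvPolynomial.induction_on with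
  | C a => simpa using Poly.const a
  | add p q hp hq => simpa using Poly.add hp hq
  | mul_X p i hp => simpa using Poly.mul hp (poly_coord i)

theorem zariski_basis {k : Type u} [Field k] {ι : Type v} {U : Set (ι → k)}
    (hU : @IsOpen _ (zariskiTop k ι) U) {x : ι → k} (hx : x ∈ U) :
    ∃ p : MvPolynomial ι k, MvPolynomial.eval x p ≠ 0 ∧ ∀ y, MvPolynomial.eval y p ≠ 0 → y ∈ U := by
  change TopologicalSpace.GenerateOpen _ U at hU
  induction hU with
  | basic s hs =>
    obtain ⟨p, rfl⟩ := hs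
    exact ⟨p, hx, fun y hy => hy⟩
  | univ => exact ⟨1, by simp, fun y _ => trivial⟩
  | inter s t _ _ ihs iht =>
    obtain ⟨p, hp, hp'⟩ := ihs hx.1
    obtain ⟨q, hq, hq'⟩ := iht hx.2
    refine ⟨p * q, by simpa using ⟨hp, hq⟩, fun y hy => ?_⟩
    rw [map_mul] at hy
    exact ⟨hp' y (left_ne_zero_of_mul hy), hq' y (right_ne_zero_of_mul hy)⟩
  | sUnion S _ ih =>
    obtain ⟨s, hs, hxs⟩ := hx
    obtain ⟨p, hp, hp'⟩ := ih s hs hxs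
    exact ⟨p, hp, fun y hy => ⟨s, hs, hp' y hy⟩⟩

theorem irreducible_of_irr {k : Type u} [Field k] {n d e : ℕ} {T : Set (BSpace k n d e)}
    (hT : Irr k T) : @IsIrreducible (ASpace k n d e) (aTop k n d e) T := by
  refine ⟨hT.1, ?_⟩
  rintro U U' ⟨O, hO, rfl⟩ ⟨O', hO', rfl⟩ ⟨x, hx, hxO⟩ ⟨y, hy, hyO⟩
  obtain ⟨p, hp, hp'⟩ := zariski_basis hO hxO
  obtain ⟨q, hq, hq'⟩ := zariski_basis hO' hyO
  obtain ⟨z, hz, h1, h2⟩ := hT.2 _ (poly_eval p) _ (poly_eval q) ⟨x, hx, hp⟩ ⟨y, hy, hq⟩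
  exact ⟨z, hz, hp' _ h1, hq' _ h2⟩

/-- The parametrizing linear map. -/
def paramMap (k : Type u) [Field k] (n d e : ℕ) (i₀ : Fin n) :
    (End k ((Fin d → k) × (Fin e → k)) × (Fin n → Matrix (Fin d) (Fin e) k)) →ₗ[k]
      BSpace k n d e where
  toFun w := (LinearMap.toMatrix' (LinearMap.fst k _ _ ∘ₗ w.1 ∘ₗ LinearMap.inl k _ _),
    LinearMap.toMatrix' (LinearMap.snd k _ _ ∘ₗ w.1 ∘ₗ LinearMap.inr k _ _),
    fun i => if i = i₀ then
      LinearMap.toMatrix' (LinearMap.fst k _ _ ∘ₗ w.1 ∘ₗ LinearMap.inr k _ _) else w.2 i)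
  map_add' a b := by
    refine Prod.ext ?_ (Prod.ext ?_ ?_)
    · simp [LinearMap.add_comp, LinearMap.comp_add]
    · simp [LinearMap.add_comp, LinearMap.comp_add]
    · ext i : 1
      by_cases h : i = i₀ <;> simp [h, LinearMap.add_comp, LinearMap.comp_add]
  map_smul' c a := by
    refine Prod.ext ?_ (Prod.ext ?_ ?_)
    · simp [LinearMap.smul_comp, LinearMap.comp_smul]
    · simp [LinearMap.smul_comp, LinearMap.comp_smul]
    · ext i : 1
      by_cases h : i = i₀ <;> simp [h, LinearMap.smul_comp, LinearMap.comp_smul]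

theorem toLin_pow {k : Type u} [Field k] {d : ℕ} (A : Matrix (Fin d) (Fin d) k) (j : ℕ) :
    Matrix.mulVecLin (A ^ j) = (Matrix.mulVecLin A : End k (Fin d → k)) ^ j := by
  induction j with
  | zero => simp [Module.End.one_eq_id]
  | succ j ih => rw [pow_succ, Matrix.mulVecLin_mul, ih, pow_succ]; rfl

theorem block_iff {k : Type u} [Field k] {d e m : ℕ}
    (W : End k ((Fin d → k) × (Fin e → k))) (A : Matrix (Fin d) (Fin d) k)
    (B : Matrix (Fin e) (Fin e) k) (C : Matrix (Fin d) (Fin e) k)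
    (h : ∀ x y, W (x, y) = (A.mulVecLin x + C.mulVecLin y, B.mulVecLin y)) :
    W ^ m = 0 ↔ A ^ m = 0 ∧ B ^ m = 0 ∧
      ∑ i ∈ Finset.range m, A ^ (m - 1 - i) * C * B ^ i = 0 := by
  have key := block_pow W A.mulVecLin B.mulVecLin C.mulVecLin h m
  have hs : ∀ y, ∑ i ∈ Finset.range m, (A.mulVecLin ^ (m - 1 - i)) (C.mulVecLin ((B.mulVecLin ^ i) y))
      = (∑ i ∈ Finset.range m, A ^ (m - 1 - i) * C * B ^ i).mulVecLin y := by
    intro y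
    rw [Matrix.mulVecLin_apply, Matrix.sum_mulVec]
    refine Finset.sum_congr rfl fun i _ => ?_
    rw [← toLin_pow, ← toLin_pow]
    simp [Matrix.mulVec_mulVec, Matrix.mul_assoc]
  have inj : ∀ {a b : ℕ} (X : Matrix (Fin a) (Fin b) k), (∀ y, X.mulVecLin y = 0) → X = 0 := by
    intro a b X hX
    ext i j
    have := congrFun (hX (Pi.single j 1)) i
    simpa using this
  simp only [hs] at key
  simp only [← toLin_pow] at key
  constructor
  · intro hW
    simp only [hW] at key
    refine ⟨inj _ fun x => ?_, inj _ fun y => ?_, inj _ fun y => ?_⟩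
    · have := congrArg Prod.fst (key x 0)
      simpa using this.symm
    · exact (congrArg Prod.snd (key 0 y)).symm
    · have := congrArg Prod.fst (key 0 y)
      simpa using this.symm
  · rintro ⟨h1, h2, h3⟩
    apply LinearMap.ext
    rintro ⟨x, y⟩
    rw [key, h1, h2, h3]
    simp

theorem irr_main {k : Type u} [Field k] [Infinite k] {n d e : ℕ} (m : ℕ) (i₀ : Fin n) :
    Irr k {x : BSpace k n d e | x.1 ^ (m + 1) = 0 ∧ x.2.1 ^ (m + 1) = 0 ∧
      ∑ i ∈ Finset.range (m + 1), x.1 ^ (m + 1 - 1 - i) * x.2.2 i₀ * x.2.1 ^ i = 0} := by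
  have h1 := irr_XX (k := k) m ((Fin d → k) × (Fin e → k))
    (LinearMap.range (LinearMap.inl k (Fin d → k) (Fin e → k)))
  have h2 := (h1.prod (Irr.univ (k := k) (V := Fin n → Matrix (Fin d) (Fin e) k))).image
    (PolyMap.linear (paramMap k n d e i₀))
  convert h2 using 1
  ext ⟨A, B, Z⟩
  constructor
  · intro hx
    let W : End k ((Fin d → k) × (Fin e → k)) :=
      (A.mulVecLin.coprod (Z i₀).mulVecLin).prod (B.mulVecLin ∘ₗ LinearMap.snd k _ _)
    refine ⟨(W, Z), ⟨⟨(block_iff W A B (Z i₀) fun x y => rfl).2 hx, ?_⟩, trivial⟩, ?_⟩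
    · rintro _ ⟨x, rfl⟩
      refine ⟨A.mulVecLin x, ?_⟩
      simp [W]
    · refine Prod.ext ?_ (Prod.ext ?_ ?_)
      · ext i j; simp [paramMap, W, LinearMap.toMatrix'_apply]
      · ext i j; simp [paramMap, W, LinearMap.toMatrix'_apply]
      · ext l i j
        by_cases h : l = i₀
        · subst h; simp [paramMap, W, LinearMap.toMatrix'_apply]
        · simp [paramMap, h]
  · rintro ⟨⟨W, Y⟩, ⟨⟨hW, hN⟩, -⟩, hx⟩
    rw [← hx]
    refine (block_iff W _ _ _ ?_).1 hW
    intro x y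
    have hsplit : W (x, y) = W (x, 0) + W (0, y) := by rw [← map_add]; simp
    obtain ⟨z, hz⟩ := hN (x, 0) ⟨x, rfl⟩
    have hz2 : (W (x, 0)).2 = 0 := by rw [← hz]; rfl
    rw [hsplit]
    refine Prod.ext ?_ ?_
    · simp [paramMap, ← Matrix.toLin'_apply', Matrix.toLin'_toMatrix']
    · simp [paramMap, ← Matrix.toLin'_apply', Matrix.toLin'_toMatrix', hz2]

end GeomIrr

/-- For `m ≥ 2` and `n ≥ 1` the algebra `A(n, m, m-1)` is geometrically
irreducible: for all `d, e ∈ ℕ`, the Zariski-closed subset of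
`M_{d×d}(k) × M_{e×e}(k) × M_{d×e}(k)^n` consisting of all tuples `(V, U, Z₁, …, Z_n)`
with `V^m = 0`, `U^m = 0` and `∑_{i=0}^{m-1} V^{m-1-i} Z₁ U^i = 0` is irreducible. -/
theorem A_n_m_msubone_geometrically_irreducible (k : Type u) [Field k] [IsAlgClosed k]
    (m n : ℕ) (hm : 2 ≤ m) (hn : 1 ≤ n) (d e : ℕ) :
    @IsIrreducible _ (aTop k n d e)
      {x : ASpace k n d e | x.1 ^ m = 0 ∧ x.2.1 ^ m = 0 ∧
        ∑ i ∈ Finset.range m, x.1 ^ (m - 1 - i) * x.2.2 ⟨0, hn⟩ * x.2.1 ^ i = 0} := by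
  obtain ⟨m, rfl⟩ : ∃ m', m = m' + 1 := ⟨m - 1, by omega⟩
  have : Infinite k := inferInstance
  exact GeomIrr.irreducible_of_irr (GeomIrr.irr_main (k := k) (n := n) (d := d) (e := e) m ⟨0, hn⟩)
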